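/- arXiv:2501.10953 — 7 statements merged into one kernel-verified Lean document; each statement's English description precedes it below -/
import Mathlib

section
/- Fix N > 0 and Γ > 0. Over all Borel probability measures P on ℝ with ∫ x² dP(x) ≤ Γ, the mutual information of the AWGN channel, defined as the Kullback–Leibler divergence D( J ‖ P ⊗ Q_P ) where J is the joint law of (X, X+Z) with X ~ P, Z ~ N(0,N) independent, and Q_P is the law of X+Z, attains its supremum, the supremum equals ½·log(1 + Γ/N), and it is attained by P = N(0, Γ) (a Gaussian with mean 0 and variance Γ), in which case the output law Q_P is N(0, Γ+N). -/
open Real MeasureTheory ProbabilityTheory Classical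

/-- Kullback–Leibler divergence (natural log): `∫ log(dμ/dν) dμ` when `μ ≪ ν` and the
log-likelihood ratio is integrable, and `⊤` otherwise. -/
noncomputable def klDiv {α : Type*} [MeasurableSpace α] (μ ν : Measure α) : EReal :=
  if μ ≪ ν ∧ Integrable (llr μ ν) μ then ((∫ x, llr μ ν x ∂μ : ℝ) : EReal) else ⊤

/-- Joint law of `(X, X + Z)` where `X ~ P` and `Z ~ N(0,N)` independent. -/
noncomputable def jointLaw (N : ℝ) (P : Measure ℝ) : Measure (ℝ × ℝ) :=
  (P.prod (gaussianReal 0 N.toNNReal)).map (fun p => (p.1, p.1 + p.2))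

/-- Output law: the law of `X + Z` where `X ~ P` and `Z ~ N(0,N)` independent. -/
noncomputable def outputLaw (N : ℝ) (P : Measure ℝ) : Measure ℝ :=
  (P.prod (gaussianReal 0 N.toNNReal)).map (fun p => p.1 + p.2)

/-- Mutual information of the AWGN channel with input law `P`:
`D(J ‖ P ⊗ Q_P)` where `J` is the joint input–output law and `Q_P` the output law. -/
noncomputable def mutualInfo (N : ℝ) (P : Measure ℝ) : EReal :=
  klDiv (jointLaw N P) (P.prod (outputLaw N P))

lemma awgn_klDiv_coe {α : Type*} [MeasurableSpace α] (μ ν : Measure α) [IsProbabilityMeasure μ]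
    [IsProbabilityMeasure ν] : klDiv μ ν = ((InformationTheory.klDiv μ ν : ENNReal) : EReal) := by
  unfold klDiv
  split_ifs with h
  · rw [← InformationTheory.toReal_klDiv_of_measure_eq h.1 (by simp)]
    exact EReal.coe_ennreal_toReal (InformationTheory.klDiv_ne_top h.1 h.2)
  · have : InformationTheory.klDiv μ ν = ⊤ := by
      by_contra h'
      exact h (InformationTheory.klDiv_ne_top_iff.1 h')
    rw [this]; rfl

lemma awgn_kl_swap (μ ν : Measure (ℝ × ℝ)) [IsProbabilityMeasure μ] [IsProbabilityMeasure ν] :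
    InformationTheory.klDiv (μ.map Prod.swap) (ν.map Prod.swap) = InformationTheory.klDiv μ ν := by
  apply le_antisymm (InformationTheory.klDiv_map_le μ ν measurable_swap)
  have : IsProbabilityMeasure (μ.map Prod.swap) :=
    Measure.isProbabilityMeasure_map measurable_swap.aemeasurable
  have : IsProbabilityMeasure (ν.map Prod.swap) :=
    Measure.isProbabilityMeasure_map measurable_swap.aemeasurable
  have h := InformationTheory.klDiv_map_le (μ.map Prod.swap) (ν.map Prod.swap)
    measurable_swap
  rw [Measure.map_map measurable_swap measurable_swap,
    Measure.map_map measurable_swap measurable_swap] at h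
  simpa using h

/-- Replacing the output marginal by any other law increases the divergence. -/
lemma awgn_kl_le (J : Measure (ℝ × ℝ)) [IsProbabilityMeasure J] (P Q G : Measure ℝ)
    [IsProbabilityMeasure P] [IsProbabilityMeasure Q] [IsProbabilityMeasure G] (hQ : J.snd = Q) :
    InformationTheory.klDiv J (P.prod Q) ≤ InformationTheory.klDiv J (P.prod G) := by
  rw [← awgn_kl_swap J (P.prod Q), ← awgn_kl_swap J (P.prod G), Measure.prod_swap,
    Measure.prod_swap]
  have : IsProbabilityMeasure (J.map Prod.swap) :=
    Measure.isProbabilityMeasure_map measurable_swap.aemeasurable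
  set J' := J.map Prod.swap with hJ'
  have hfst : J'.fst = Q := by
    rw [← hQ, hJ', Measure.fst_map_swap]
  have hd : Q ⊗ₘ J'.condKernel = J' := by
    rw [← hfst]; exact J'.disintegrate J'.condKernel
  have key := InformationTheory.klDiv_compProd_eq_add (μ := Q) (ν := G) (κ := J'.condKernel)
    (η := Kernel.const ℝ P)
  rw [Measure.compProd_const, Measure.compProd_const, hd] at key
  rw [key]
  exact le_add_self

instance awgn_isProb_joint (N : ℝ) (P : Measure ℝ) [IsProbabilityMeasure P] :
    IsProbabilityMeasure (jointLaw N P) :=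
  Measure.isProbabilityMeasure_map (by fun_prop)

instance awgn_isProb_output (N : ℝ) (P : Measure ℝ) [IsProbabilityMeasure P] :
    IsProbabilityMeasure (outputLaw N P) :=
  Measure.isProbabilityMeasure_map (by fun_prop)

lemma awgn_joint_snd (N : ℝ) (P : Measure ℝ) : (jointLaw N P).snd = outputLaw N P := by
  unfold jointLaw outputLaw
  rw [Measure.snd, Measure.map_map (by fun_prop) (by fun_prop)]
  rfl

noncomputable def awgnRatio (N M : ℝ) (p : ℝ × ℝ) : ℝ :=
  gaussianPDFReal p.1 N.toNNReal p.2 / gaussianPDFReal 0 M.toNNReal p.2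

lemma awgn_measurable_ratio (N M : ℝ) : Measurable (awgnRatio N M) := by
  unfold awgnRatio
  unfold gaussianPDFReal
  fun_prop

lemma awgn_gauss_density (N M : ℝ) (hN : 0 < N) (hM : 0 < M) (x : ℝ) :
    gaussianReal x N.toNNReal = (gaussianReal 0 M.toNNReal).withDensity
      (fun y => ENNReal.ofReal (awgnRatio N M (x, y))) := by
  have hN' : N.toNNReal ≠ 0 := by simpa using hN
  have hM' : M.toNNReal ≠ 0 := by simpa using hM
  have hm := awgn_measurable_ratio N M
  rw [gaussianReal_of_var_ne_zero _ hN', gaussianReal_of_var_ne_zero _ hM',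
    ← withDensity_mul _ (measurable_gaussianPDF _ _) (by fun_prop)]
  congr 1
  ext y
  have h2 := gaussianPDFReal_pos 0 M.toNNReal y hM'
  simp only [Pi.mul_apply, gaussianPDF, awgnRatio]
  rw [← ENNReal.ofReal_mul h2.le]
  congr 1
  field_simp

lemma awgn_joint_density (N M : ℝ) (hN : 0 < N) (hM : 0 < M) (P : Measure ℝ)
    [IsProbabilityMeasure P] :
    jointLaw N P = (P.prod (gaussianReal 0 M.toNNReal)).withDensity
      (fun p => ENNReal.ofReal (awgnRatio N M p)) := by
  have hm := awgn_measurable_ratio N M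
  ext s hs
  unfold jointLaw
  have hf : Measurable (fun p : ℝ × ℝ => (p.1, p.1 + p.2)) := by fun_prop
  rw [Measure.map_apply hf hs, Measure.prod_apply (hf hs), withDensity_apply _ hs,
    ← lintegral_indicator hs, lintegral_prod _ (by
      exact ((by fun_prop : Measurable fun p => ENNReal.ofReal (awgnRatio N M p)).indicator
        hs).aemeasurable)]
  congr 1
  ext x
  have hsx : MeasurableSet (Prod.mk x ⁻¹' s) := measurable_prodMk_left hs
  have h1 := gaussianReal_map_const_add (μ := 0) (v := N.toNNReal) x
  rw [zero_add] at h1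
  have h2 : gaussianReal x N.toNNReal (Prod.mk x ⁻¹' s) = gaussianReal 0 N.toNNReal
      (Prod.mk x ⁻¹' ((fun p : ℝ × ℝ => (p.1, p.1 + p.2)) ⁻¹' s)) := by
    rw [← h1, Measure.map_apply (by fun_prop) hsx]; rfl
  rw [← h2, awgn_gauss_density N M hN hM x, withDensity_apply _ hsx, ← lintegral_indicator hsx]
  rfl

lemma awgn_log_ratio (N M : ℝ) (hN : 0 < N) (hM : 0 < M) (x z : ℝ) :
    Real.log (awgnRatio N M (x, x + z)) =
      (1/2) * Real.log (M / N) - z^2 / (2 * N) + (x + z)^2 / (2 * M) := by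
  unfold awgnRatio gaussianPDFReal
  have h1 : 0 < √(2 * π * N) := by positivity
  have h2 : 0 < √(2 * π * M) := by positivity
  simp only [Real.coe_toNNReal _ hN.le, Real.coe_toNNReal _ hM.le]
  rw [Real.log_div (by positivity) (by positivity), Real.log_mul (by positivity) (by positivity),
    Real.log_mul (by positivity) (by positivity), Real.log_exp, Real.log_exp, Real.log_inv,
    Real.log_inv, Real.log_sqrt (by positivity), Real.log_sqrt (by positivity),
    Real.log_mul (x := 2 * π) (y := N) (by positivity) (by positivity),
    Real.log_mul (x := 2 * π) (y := M) (by positivity) (by positivity), Real.log_div (by positivity) (by positivity)]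
  ring

lemma awgn_gauss_sq (v : ℝ) (hv : 0 ≤ v) : Integrable (fun z => z^2) (gaussianReal 0 v.toNNReal) ∧
    ∫ z, z^2 ∂(gaussianReal 0 v.toNNReal) = v := by
  have h := memLp_id_gaussianReal (μ := 0) (v := v.toNNReal) 2
  refine ⟨h.integrable_sq, ?_⟩
  have h1 := variance_fun_id_gaussianReal (μ := 0) (v := v.toNNReal)
  rw [variance_eq_integral (by fun_prop)] at h1
  simpa [hv] using h1

lemma awgn_kl_value (N M : ℝ) (hN : 0 < N) (hM : 0 < M) (P : Measure ℝ) [IsProbabilityMeasure P]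
    (hP : Integrable (fun t => t^2) P) :
    InformationTheory.klDiv (jointLaw N P) (P.prod (gaussianReal 0 M.toNNReal)) =
      ENNReal.ofReal ((1/2) * Real.log (M / N) - 1/2 + ((∫ t, t^2 ∂P) + N) / (2 * M)) := by
  have hm := awgn_measurable_ratio N M
  have hJ := awgn_joint_density N M hN hM P
  have hac : jointLaw N P ≪ P.prod (gaussianReal 0 M.toNNReal) := by
    rw [hJ]; exact withDensity_absolutelyContinuous _ _
  have hllr : llr (jointLaw N P) (P.prod (gaussianReal 0 M.toNNReal)) =ᵐ[jointLaw N P]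
      fun p => Real.log (awgnRatio N M p) := by
    apply hac.ae_le
    have := Measure.rnDeriv_withDensity (P.prod (gaussianReal 0 M.toNNReal))
      (f := fun p => ENNReal.ofReal (awgnRatio N M p)) (by fun_prop)
    rw [← hJ] at this
    filter_upwards [this] with p hp
    rw [llr, hp, ENNReal.toReal_ofReal]
    exact div_nonneg (gaussianPDFReal_nonneg _ _ _) (gaussianPDFReal_nonneg _ _ _)
  obtain ⟨hz, hzv⟩ := awgn_gauss_sq N hN.le
  have hX1 : Integrable (fun p : ℝ × ℝ => p.1^2) (P.prod (gaussianReal 0 N.toNNReal)) :=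
    hP.comp_fst _
  have hZ1 : Integrable (fun p : ℝ × ℝ => p.2^2) (P.prod (gaussianReal 0 N.toNNReal)) :=
    hz.comp_snd _
  have hx : Integrable (fun t : ℝ => t) P :=
    ((memLp_two_iff_integrable_sq (by fun_prop)).2 hP).integrable (by norm_num)
  have hz' : Integrable (fun t : ℝ => t) (gaussianReal 0 N.toNNReal) :=
    ((memLp_two_iff_integrable_sq (by fun_prop)).2 hz).integrable (by norm_num)
  have hXZ : Integrable (fun p : ℝ × ℝ => p.1 * p.2) (P.prod (gaussianReal 0 N.toNNReal)) :=
    hx.mul_prod hz'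
  have hXv : ∫ p : ℝ × ℝ, p.1^2 ∂(P.prod (gaussianReal 0 N.toNNReal)) = ∫ t, t^2 ∂P := by
    rw [integral_fun_fst (fun t : ℝ => t^2)]; simp
  have hZv : ∫ p : ℝ × ℝ, p.2^2 ∂(P.prod (gaussianReal 0 N.toNNReal)) = N := by
    rw [integral_fun_snd (fun t : ℝ => t^2), hzv]; simp
  have hXZv : ∫ p : ℝ × ℝ, p.1 * p.2 ∂(P.prod (gaussianReal 0 N.toNNReal)) = 0 := by
    rw [integral_prod_mul (fun t : ℝ => t) (fun t : ℝ => t), integral_id_gaussianReal, mul_zero]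
  have hf : Measurable (fun p : ℝ × ℝ => (p.1, p.1 + p.2)) := by fun_prop
  have hlog : (fun p : ℝ × ℝ => Real.log (awgnRatio N M (p.1, p.1 + p.2))) = fun p =>
      ((((1/2) * Real.log (M / N)) + (1 / (2*M)) * p.1^2) + (1/(2*M) - 1/(2*N)) * p.2^2)
        + (1/M) * (p.1 * p.2) := by
    ext p
    rw [awgn_log_ratio N M hN hM]
    field_simp
    ring
  have i1 := (integrable_const (μ := P.prod (gaussianReal 0 N.toNNReal))
    ((1/2) * Real.log (M / N)))
  have i2 := hX1.const_mul (1/(2*M))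
  have i3 := hZ1.const_mul (1/(2*M) - 1/(2*N))
  have i4 := hXZ.const_mul (1/M)
  have i12 : Integrable (fun p : ℝ × ℝ => (1/2) * Real.log (M / N) + (1 / (2*M)) * p.1^2)
      (P.prod (gaussianReal 0 N.toNNReal)) := i1.add i2
  have i123 : Integrable (fun p : ℝ × ℝ => ((1/2) * Real.log (M / N) + (1 / (2*M)) * p.1^2)
      + (1/(2*M) - 1/(2*N)) * p.2^2) (P.prod (gaussianReal 0 N.toNNReal)) := i12.add i3
  have hlm : Measurable (fun p => Real.log (awgnRatio N M p)) := hm.log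
  have hint : Integrable (fun p => Real.log (awgnRatio N M p)) (jointLaw N P) := by
    unfold jointLaw
    rw [integrable_map_measure hlm.aestronglyMeasurable hf.aemeasurable]
    change Integrable (fun p : ℝ × ℝ => Real.log (awgnRatio N M (p.1, p.1 + p.2))) _
    rw [hlog]
    exact ((i1.add i2).add i3).add i4
  rw [InformationTheory.klDiv_of_ac_of_integrable hac ((integrable_congr hllr).2 hint),
    integral_congr_ae hllr]
  congr 1
  have : ∫ p, Real.log (awgnRatio N M p) ∂(jointLaw N P) =
      (1/2) * Real.log (M / N) - 1/2 + ((∫ t, t^2 ∂P) + N) / (2 * M) := by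
    unfold jointLaw
    rw [integral_map hf.aemeasurable hlm.aestronglyMeasurable, hlog, integral_add i123 i4,
      integral_add i12 i3, integral_add i1 i2, integral_const_mul, integral_const_mul,
      integral_const_mul, integral_const_mul, hXv, hZv, hXZv]
    simp
    field_simp
    ring
  rw [this]
  simp

lemma awgn_output_gauss (N Γ : ℝ) (hN : 0 < N) (hΓ : 0 < Γ) :
    outputLaw N (gaussianReal 0 Γ.toNNReal) = gaussianReal 0 (Γ + N).toNNReal := by
  have := gaussianReal_conv_gaussianReal (m₁ := 0) (m₂ := 0) (v₁ := Γ.toNNReal) (v₂ := N.toNNReal)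
  rw [Real.toNNReal_add hΓ.le hN.le]
  simpa [Measure.conv, outputLaw] using this

lemma awgn_mi_gauss (N Γ : ℝ) (hN : 0 < N) (hΓ : 0 < Γ) :
    mutualInfo N (gaussianReal 0 Γ.toNNReal) = (((1/2) * Real.log (1 + Γ/N) : ℝ) : EReal) := by
  obtain ⟨hi, hv⟩ := awgn_gauss_sq Γ hΓ.le
  unfold mutualInfo
  rw [awgn_klDiv_coe, awgn_output_gauss N Γ hN hΓ,
    awgn_kl_value N (Γ + N) hN (by positivity) _ hi, hv]
  have : (1/2) * Real.log ((Γ + N) / N) - 1/2 + (Γ + N) / (2 * (Γ + N)) =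
      (1/2) * Real.log (1 + Γ/N) := by
    have : (Γ + N) / N = 1 + Γ / N := by field_simp; ring
    rw [this]; field_simp; ring
  have h0 : 0 ≤ (1/2) * Real.log (1 + Γ/N) :=
    mul_nonneg (by norm_num) (Real.log_nonneg (by linarith [div_pos hΓ hN]))
  rw [this, EReal.coe_ennreal_ofReal, max_eq_left h0]

lemma awgn_mi_le (N Γ : ℝ) (hN : 0 < N) (hΓ : 0 < Γ) (P : Measure ℝ) [IsProbabilityMeasure P]
    (hP : (∫⁻ t, ENNReal.ofReal (t^2) ∂P) ≤ ENNReal.ofReal Γ) :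
    mutualInfo N P ≤ (((1/2) * Real.log (1 + Γ/N) : ℝ) : EReal) := by
  have hi : Integrable (fun t : ℝ => t^2) P := by
    refine ⟨by fun_prop, ?_⟩
    rw [hasFiniteIntegral_iff_ofReal (Filter.Eventually.of_forall fun t => sq_nonneg t)]
    exact hP.trans_lt ENNReal.ofReal_lt_top
  have hv : ∫ t, t^2 ∂P ≤ Γ := by
    rw [integral_eq_lintegral_of_nonneg_ae (Filter.Eventually.of_forall fun t => sq_nonneg t)
      (by fun_prop)]
    exact ENNReal.toReal_le_of_le_ofReal hΓ.le hP
  unfold mutualInfo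
  rw [awgn_klDiv_coe]
  have h := awgn_kl_le (jointLaw N P) P (outputLaw N P) (gaussianReal 0 (Γ + N).toNNReal)
    (awgn_joint_snd N P)
  rw [awgn_kl_value N (Γ + N) hN (by positivity) P hi] at h
  have h0 : 0 ≤ (1/2) * Real.log (1 + Γ/N) :=
    mul_nonneg (by norm_num) (Real.log_nonneg (by linarith [div_pos hΓ hN]))
  have hle : (1/2) * Real.log ((Γ + N) / N) - 1/2 + ((∫ t, t^2 ∂P) + N) / (2 * (Γ + N)) ≤
      (1/2) * Real.log (1 + Γ/N) := by
    have h1 : (Γ + N) / N = 1 + Γ / N := by field_simp; ring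
    have h2 : ((∫ t, t^2 ∂P) + N) / (2 * (Γ + N)) ≤ 1/2 := by
      rw [div_le_iff₀ (by positivity)]; linarith
    rw [h1]; linarith
  have h3 := h.trans (ENNReal.ofReal_le_ofReal hle)
  calc ((InformationTheory.klDiv (jointLaw N P) (P.prod (outputLaw N P)) : ENNReal) : EReal)
      ≤ ((ENNReal.ofReal ((1/2) * Real.log (1 + Γ/N)) : ENNReal) : EReal) :=
        EReal.coe_ennreal_le_coe_ennreal_iff.2 h3
    _ = _ := by rw [EReal.coe_ennreal_ofReal, max_eq_left h0]

/-- over input laws `P` with `∫ x² dP ≤ Γ`, the AWGN mutual information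
attains its supremum, which equals `½ log(1 + Γ/N)`; it is attained by `P = N(0,Γ)`,
in which case the output law is `N(0, Γ+N)`. -/
theorem awgn_capacity_cost (N Γ : ℝ) (hN : 0 < N) (hΓ : 0 < Γ) :
    IsGreatest {x : EReal | ∃ P : Measure ℝ, IsProbabilityMeasure P ∧
        (∫⁻ t, ENNReal.ofReal (t^2) ∂P) ≤ ENNReal.ofReal Γ ∧ mutualInfo N P = x}
      (((1/2) * Real.log (1 + Γ/N) : ℝ) : EReal)
    ∧ mutualInfo N (gaussianReal 0 Γ.toNNReal)
        = (((1/2) * Real.log (1 + Γ/N) : ℝ) : EReal)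
    ∧ outputLaw N (gaussianReal 0 Γ.toNNReal) = gaussianReal 0 (Γ + N).toNNReal := by
  refine ⟨⟨⟨gaussianReal 0 Γ.toNNReal, inferInstance, ?_, awgn_mi_gauss N Γ hN hΓ⟩, ?_⟩,
    awgn_mi_gauss N Γ hN hΓ, awgn_output_gauss N Γ hN hΓ⟩
  · obtain ⟨hi, hv⟩ := awgn_gauss_sq Γ hΓ.le
    rw [← ofReal_integral_eq_lintegral_ofReal hi
      (Filter.Eventually.of_forall fun t => sq_nonneg t), hv]
  · rintro x ⟨P, hP, hc, rfl⟩
    exact awgn_mi_le N Γ hN hΓ P hc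
end

section
/- Fix N > 0 and Γ > 0, and let x ∈ ℝ. If Y ~ N(x, N), then the variance of the random variable log( W(Y|x) / Q*(Y) ) equals (Γ² + 2x²N) / (2(N+Γ)²). In particular, if x² is replaced by its average Γ under N(0,Γ), this quantity equals V(Γ) := (Γ² + 2ΓN)/(2(N+Γ)²). -/
open Real MeasureTheory ProbabilityTheory

/-- The AWGN transition density `W(y|x)` with noise variance `N`. -/
noncomputable def W (N x y : ℝ) : ℝ :=
  (2 * π * N) ^ (-(1:ℝ)/2) * Real.exp (-(y - x)^2 / (2 * N))

/-- The capacity-achieving output density `Q*(y) = N(0, Γ+N)` density. -/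
noncomputable def Qstar (N Γ y : ℝ) : ℝ :=
  (2 * π * (Γ + N)) ^ (-(1:ℝ)/2) * Real.exp (-y^2 / (2 * (Γ + N)))

open scoped NNReal

lemma aux_deriv (v : ℝ) (p q : ℝ → ℝ) (hp : ∀ t, HasDerivAt p (q t) t) :
    deriv (fun t => p t * rexp (v * t ^ 2 / 2))
      = fun t => (q t + p t * (v * t)) * rexp (v * t ^ 2 / 2) := by
  funext t
  have h1 : HasDerivAt (fun t : ℝ => v * t ^ 2 / 2) (v * t) t := by
    have := ((hasDerivAt_pow 2 t).const_mul v).div_const 2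
    refine this.congr_deriv ?_
    push_cast
    ring
  have := ((hp t).mul h1.exp).deriv
  refine this.trans ?_
  ring

lemma aux_moment (v : ℝ≥0) (n : ℕ) :
    ∫ z, z ^ n ∂(gaussianReal 0 v) = iteratedDeriv n (fun t => rexp ((v : ℝ) * t ^ 2 / 2)) 0 := by
  have h := iteratedDeriv_mgf_zero (X := id) (μ := gaussianReal 0 v)
    (by simp [integrableExpSet_id_gaussianReal]) n
  rw [mgf_id_gaussianReal] at h
  simpa using h.symm

lemma aux_d1 (v : ℝ) : deriv (fun t => rexp (v * t ^ 2 / 2))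
    = fun t => (v * t) * rexp (v * t ^ 2 / 2) := by
  have := aux_deriv v (fun _ => 1) (fun _ => 0) (fun t => hasDerivAt_const t 1)
  simpa using this

lemma aux_d2 (v : ℝ) : deriv (fun t => (v * t) * rexp (v * t ^ 2 / 2))
    = fun t => (v + v ^ 2 * t ^ 2) * rexp (v * t ^ 2 / 2) := by
  rw [aux_deriv v (fun t => v * t) (fun _ => v)
    (fun t => by simpa using (hasDerivAt_id t).const_mul v)]
  funext t
  ring

lemma aux_d3 (v : ℝ) : deriv (fun t => (v + v ^ 2 * t ^ 2) * rexp (v * t ^ 2 / 2))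
    = fun t => (3 * v ^ 2 * t + v ^ 3 * t ^ 3) * rexp (v * t ^ 2 / 2) := by
  rw [aux_deriv v (fun t => v + v ^ 2 * t ^ 2) (fun t => v ^ 2 * (2 * t))
    (fun t => by simpa using ((hasDerivAt_pow 2 t).const_mul (v ^ 2)).const_add v)]
  funext t
  ring

lemma aux_d4 (v : ℝ) : deriv (fun t => (3 * v ^ 2 * t + v ^ 3 * t ^ 3) * rexp (v * t ^ 2 / 2))
    = fun t => (3 * v ^ 2 + v ^ 3 * (3 * t ^ 2) + (3 * v ^ 2 * t + v ^ 3 * t ^ 3) * (v * t))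
        * rexp (v * t ^ 2 / 2) := by
  rw [aux_deriv v (fun t => 3 * v ^ 2 * t + v ^ 3 * t ^ 3)
    (fun t => 3 * v ^ 2 + v ^ 3 * (3 * t ^ 2))
    (fun t => (((hasDerivAt_id t).const_mul (3 * v ^ 2)).add
      ((hasDerivAt_pow 3 t).const_mul (v ^ 3))).congr_deriv (by simp))]

lemma aux_m1 (v : ℝ≥0) : ∫ z, z ∂(gaussianReal 0 v) = 0 := integral_id_gaussianReal

lemma aux_m2 (v : ℝ≥0) : ∫ z, z ^ 2 ∂(gaussianReal 0 v) = v := by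
  rw [aux_moment]
  simp only [iteratedDeriv_succ', aux_d1, aux_d2, iteratedDeriv_zero]
  simp

lemma aux_m3 (v : ℝ≥0) : ∫ z, z ^ 3 ∂(gaussianReal 0 v) = 0 := by
  rw [aux_moment]
  simp only [iteratedDeriv_succ', aux_d1, aux_d2, aux_d3, iteratedDeriv_zero]
  simp

lemma aux_m4 (v : ℝ≥0) : ∫ z, z ^ 4 ∂(gaussianReal 0 v) = 3 * (v : ℝ) ^ 2 := by
  rw [aux_moment]
  simp only [iteratedDeriv_succ', aux_d1, aux_d2, aux_d3, aux_d4, iteratedDeriv_zero]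
  simp

lemma aux_int (v : ℝ≥0) (n : ℕ) : Integrable (fun z : ℝ => z ^ n) (gaussianReal 0 v) := by
  have := (memLp_id_gaussianReal' (μ := 0) (v := v) (n : ENNReal) (by simp)).integrable_norm_pow'
  refine this.mono' (by fun_prop) (Filter.Eventually.of_forall fun z => ?_)
  simp

lemma aux_poly (v : ℝ≥0) (a b c d e : ℝ) :
    ∫ z, (a * z ^ 4 + b * z ^ 3 + c * z ^ 2 + d * z + e) ∂(gaussianReal 0 v)
      = a * (3 * (v : ℝ) ^ 2) + c * v + e := by
  have i4 := (aux_int v 4).const_mul a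
  have i3 := (aux_int v 3).const_mul b
  have i2 := (aux_int v 2).const_mul c
  have i1 : Integrable (fun z : ℝ => d * z) (gaussianReal 0 v) := by
    simpa using (aux_int v 1).const_mul d
  have j3 : Integrable (fun z : ℝ => a * z ^ 4 + b * z ^ 3) (gaussianReal 0 v) := i4.add i3
  have j2 : Integrable (fun z : ℝ => a * z ^ 4 + b * z ^ 3 + c * z ^ 2) (gaussianReal 0 v) :=
    j3.add i2
  have j1 : Integrable (fun z : ℝ => a * z ^ 4 + b * z ^ 3 + c * z ^ 2 + d * z)
      (gaussianReal 0 v) := j2.add i1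
  rw [integral_add j1 (integrable_const e), integral_add j2 i1, integral_add j3 i2,
    integral_add i4 i3]
  have hd : ∫ z, d * z ∂(gaussianReal 0 v) = 0 := by
    rw [integral_const_mul d (fun z : ℝ => z), aux_m1, mul_zero]
  rw [hd]
  simp only [integral_const_mul, aux_m2, aux_m3, aux_m4]
  simp

lemma aux_var (v : ℝ≥0) (a b c : ℝ) :
    variance (fun z => a * z ^ 2 + b * z + c) (gaussianReal 0 v)
      = 2 * a ^ 2 * (v : ℝ) ^ 2 + b ^ 2 * v := by
  rw [variance_eq_integral (by fun_prop)]
  have hm : ∫ z, (a * z ^ 2 + b * z + c) ∂(gaussianReal 0 v) = a * v + c := by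
    have := aux_poly v 0 0 a b c
    simpa using this
  rw [hm]
  have := aux_poly v (a ^ 2) (2 * a * b) (b ^ 2 - 2 * a ^ 2 * v) (- 2 * a * b * v) (a ^ 2 * v ^ 2)
  rw [show (fun z : ℝ => (a * z ^ 2 + b * z + c - (a * (v : ℝ) + c)) ^ 2)
    = fun z => a ^ 2 * z ^ 4 + 2 * a * b * z ^ 3 + (b ^ 2 - 2 * a ^ 2 * v) * z ^ 2
      + (- 2 * a * b * v) * z + a ^ 2 * v ^ 2 from by funext z; ring, this]
  ring

lemma aux_log (N Γ x z : ℝ) (hN : 0 < N) (hΓ : 0 < Γ) :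
    Real.log (W N x (z + x) / Qstar N Γ (z + x))
      = (1 / (2 * (Γ + N)) - 1 / (2 * N)) * z ^ 2 + x / (Γ + N) * z
        + (Real.log ((2 * π * N) ^ (-(1:ℝ)/2)) - Real.log ((2 * π * (Γ + N)) ^ (-(1:ℝ)/2))
          + x ^ 2 / (2 * (Γ + N))) := by
  have h1 : 0 < (2 * π * N) ^ (-(1:ℝ)/2) := by positivity
  have h2 : 0 < (2 * π * (Γ + N)) ^ (-(1:ℝ)/2) := by positivity
  unfold W Qstar
  rw [Real.log_div (by positivity) (by positivity), Real.log_mul h1.ne' (Real.exp_ne_zero _),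
    Real.log_mul h2.ne' (Real.exp_ne_zero _), Real.log_exp, Real.log_exp]
  have : Γ + N ≠ 0 := by positivity
  field_simp
  ring

/-- If `Y ~ N(x, N)`, then
`Var(log (W(Y|x)/Q*(Y))) = (Γ² + 2x²N)/(2(N+Γ)²)`; and replacing `x²` by its
average `Γ` under `N(0,Γ)` yields `V(Γ) = (Γ² + 2ΓN)/(2(N+Γ)²)`. -/
theorem awgn_information_density_variance (N Γ x : ℝ) (hN : 0 < N) (hΓ : 0 < Γ) :
    variance (fun y => Real.log (W N x y / Qstar N Γ y)) (gaussianReal x N.toNNReal)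
        = (Γ^2 + 2 * x^2 * N) / (2 * (N + Γ)^2)
    ∧ ∫ x' : ℝ, (Γ^2 + 2 * x'^2 * N) / (2 * (N + Γ)^2) ∂(gaussianReal 0 Γ.toNNReal)
        = (Γ^2 + 2 * Γ * N) / (2 * (N + Γ)^2) := by
  constructor
  · have hmap : gaussianReal x N.toNNReal
        = (gaussianReal 0 N.toNNReal).map (fun z => z + x) := by
      rw [gaussianReal_map_add_const, zero_add]
    have hmeas : Measurable (fun y => Real.log (W N x y / Qstar N Γ y)) := by
      unfold W Qstar
      fun_prop
    rw [hmap, variance_map hmeas.aemeasurable (by fun_prop)]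
    have : ((fun y => Real.log (W N x y / Qstar N Γ y)) ∘ fun z => z + x)
        = fun z => (1 / (2 * (Γ + N)) - 1 / (2 * N)) * z ^ 2 + x / (Γ + N) * z
        + (Real.log ((2 * π * N) ^ (-(1:ℝ)/2)) - Real.log ((2 * π * (Γ + N)) ^ (-(1:ℝ)/2))
          + x ^ 2 / (2 * (Γ + N))) := by
      funext z
      exact aux_log N Γ x z hN hΓ
    rw [this, aux_var, Real.coe_toNNReal N hN.le]
    have h1 : Γ + N ≠ 0 := by positivity
    have h2 : N + Γ ≠ 0 := by positivity
    rw [add_comm N Γ]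
    field_simp
    ring
  · rw [integral_div]
    congr 1
    have := aux_poly Γ.toNNReal 0 0 (2 * N) 0 (Γ ^ 2)
    rw [Real.coe_toNNReal Γ hΓ.le] at this
    rw [show (fun x' : ℝ => Γ ^ 2 + 2 * x' ^ 2 * N)
      = fun z => 0 * z ^ 4 + 0 * z ^ 3 + 2 * N * z ^ 2 + 0 * z + Γ ^ 2 from by funext z; ring, this]
    ring
end

section
/- Fix N > 0, Γ > 0, n ≥ 1, and x = (x₁,…,xₙ) ∈ ℝⁿ. Let Y₁,…,Yₙ be independent with Yᵢ ~ N(xᵢ, N). Then Var( Σᵢ₌₁ⁿ log(W(Yᵢ|xᵢ)/Q*(Yᵢ)) ) = (nΓ² + 2N‖x‖²) / (2(Γ+N)²). -/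
open Real MeasureTheory ProbabilityTheory

lemma gauss_deriv_step (v : ℝ) (p p' : ℝ → ℝ) (hp : ∀ t, HasDerivAt p (p' t) t) :
    deriv (fun t => p t * rexp (v * t ^ 2 / 2))
      = fun t => (p' t + v * t * p t) * rexp (v * t ^ 2 / 2) := by
  ext t
  have h1 : HasDerivAt (fun t : ℝ => v * t ^ 2 / 2) (v * t) t := by
    have := (((hasDerivAt_id t).pow 2).const_mul v).div_const 2
    refine HasDerivAt.congr_deriv this ?_
    simp only [id]
    push_cast
    ring
  refine (HasDerivAt.deriv ((hp t).mul h1.exp)).trans ?_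
  ring

lemma gauss_moment (v : NNReal) (k : ℕ) :
    ∫ z, z ^ k ∂(gaussianReal 0 v)
      = iteratedDeriv k (fun t : ℝ => (1:ℝ) * rexp ((v:ℝ) * t ^ 2 / 2)) 0 := by
  have h : ∫ z, z ^ k ∂(gaussianReal 0 v)
      = iteratedDeriv k (mgf (fun x ↦ x) (gaussianReal 0 v)) 0 := by
    rw [iteratedDeriv_mgf_zero] <;> simp
  rw [h, mgf_fun_id_gaussianReal]
  simp

lemma gauss_d1 (v : ℝ) : deriv (fun t : ℝ => (1:ℝ) * rexp (v * t ^ 2 / 2))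
    = fun t => (v * t) * rexp (v * t ^ 2 / 2) := by
  rw [gauss_deriv_step v (fun _ => 1) (fun _ => 0) (fun t => hasDerivAt_const t 1)]
  ext t; ring

lemma gauss_d2 (v : ℝ) : deriv (fun t : ℝ => (v * t) * rexp (v * t ^ 2 / 2))
    = fun t => (v + v ^ 2 * t ^ 2) * rexp (v * t ^ 2 / 2) := by
  rw [gauss_deriv_step v (fun t => v * t) (fun _ => v)
    (fun t => by simpa using (hasDerivAt_id t).const_mul v)]
  ext t; ring

lemma gauss_d3 (v : ℝ) : deriv (fun t : ℝ => (v + v ^ 2 * t ^ 2) * rexp (v * t ^ 2 / 2))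
    = fun t => (3 * v ^ 2 * t + v ^ 3 * t ^ 3) * rexp (v * t ^ 2 / 2) := by
  rw [gauss_deriv_step v (fun t => v + v ^ 2 * t ^ 2) (fun t => v ^ 2 * (2 * t))
    (fun t => by simpa using (((hasDerivAt_id t).pow 2).const_mul (v ^ 2)).const_add v)]
  ext t; ring

lemma gauss_d4 (v : ℝ) :
    deriv (fun t : ℝ => (3 * v ^ 2 * t + v ^ 3 * t ^ 3) * rexp (v * t ^ 2 / 2)) 0
    = 3 * v ^ 2 := by
  rw [gauss_deriv_step v (fun t => 3 * v ^ 2 * t + v ^ 3 * t ^ 3)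
    (fun t => 3 * v ^ 2 + v ^ 3 * (3 * t ^ 2))
    (fun t => ?_)]
  · simp
  · have h := ((hasDerivAt_id t).const_mul (3 * v ^ 2)).add
      (((hasDerivAt_id t).pow 3).const_mul (v ^ 3))
    refine HasDerivAt.congr_deriv h ?_
    simp

lemma gauss_m2 (v : NNReal) : ∫ z, z ^ 2 ∂(gaussianReal 0 v) = v := by
  rw [gauss_moment, iteratedDeriv_succ, iteratedDeriv_one, gauss_d1, gauss_d2]
  simp

lemma gauss_m3 (v : NNReal) : ∫ z, z ^ 3 ∂(gaussianReal 0 v) = 0 := by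
  rw [gauss_moment, iteratedDeriv_succ, iteratedDeriv_succ, iteratedDeriv_one, gauss_d1,
    gauss_d2, gauss_d3]
  simp

lemma gauss_m4 (v : NNReal) : ∫ z, z ^ 4 ∂(gaussianReal 0 v) = 3 * (v:ℝ) ^ 2 := by
  rw [gauss_moment, iteratedDeriv_succ, iteratedDeriv_succ, iteratedDeriv_succ,
    iteratedDeriv_one, gauss_d1, gauss_d2, gauss_d3, gauss_d4]

lemma gauss_int (v : NNReal) (k : ℕ) : Integrable (fun z : ℝ => z ^ k) (gaussianReal 0 v) :=
  integrable_pow_of_mem_interior_integrableExpSet (X := fun z : ℝ => z) (by simp) k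

lemma gauss_quad_memLp (v : NNReal) (a b : ℝ) :
    MemLp (fun z : ℝ => a * z ^ 2 + b * z) 2 (gaussianReal 0 v) := by
  rw [memLp_two_iff_integrable_sq (by fun_prop)]
  have : (fun z : ℝ => (a * z ^ 2 + b * z) ^ 2)
      = fun z => a ^ 2 * z ^ 4 + 2 * a * b * z ^ 3 + b ^ 2 * z ^ 2 := by
    ext z; ring
  rw [this]
  exact (((gauss_int v 4).const_mul _).add ((gauss_int v 3).const_mul _)).add
    ((gauss_int v 2).const_mul _)

lemma gauss_quad_var (v : NNReal) (a b : ℝ) :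
    variance (fun z : ℝ => a * z ^ 2 + b * z) (gaussianReal 0 v)
      = 2 * a ^ 2 * (v:ℝ) ^ 2 + b ^ 2 * v := by
  rw [variance_eq_sub (gauss_quad_memLp v a b)]
  have : ((fun z : ℝ => a * z ^ 2 + b * z) ^ 2)
      = fun z => a ^ 2 * z ^ 4 + 2 * a * b * z ^ 3 + b ^ 2 * z ^ 2 := by
    ext z; simp only [Pi.pow_apply]; ring
  rw [this]
  have h1 : Integrable (fun z : ℝ => z) (gaussianReal 0 v) := by simpa using gauss_int v 1
  have h43 : Integrable (fun z : ℝ => a ^ 2 * z ^ 4 + 2 * a * b * z ^ 3) (gaussianReal 0 v) :=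
    ((gauss_int v 4).const_mul _).add ((gauss_int v 3).const_mul _)
  rw [integral_add h43 ((gauss_int v 2).const_mul _),
    integral_add ((gauss_int v 4).const_mul _) ((gauss_int v 3).const_mul _),
    integral_add ((gauss_int v 2).const_mul _) (h1.const_mul _)]
  have hb : ∫ z, b * z ∂(gaussianReal 0 v) = 0 := by
    rw [integral_const_mul b (fun z : ℝ => z), integral_id_gaussianReal, mul_zero]
  rw [hb]
  simp only [integral_const_mul, gauss_m2, gauss_m3, gauss_m4]
  ring

lemma log_ratio (N Γ : ℝ) (hN : 0 < N) (hΓ : 0 < Γ) (x : ℝ) : ∃ c : ℝ, ∀ y,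
    Real.log (W N x y / Qstar N Γ y)
      = ((-Γ / (2 * N * (Γ + N))) * (y - x) ^ 2 + (x / (Γ + N)) * (y - x)) + c := by
  refine ⟨Real.log ((2 * π * N) ^ (-(1:ℝ)/2)) - Real.log ((2 * π * (Γ + N)) ^ (-(1:ℝ)/2))
    + x ^ 2 / (2 * (Γ + N)), fun y => ?_⟩
  have h1 : 0 < (2 * π * N) ^ (-(1:ℝ)/2) := by positivity
  have h2 : 0 < (2 * π * (Γ + N)) ^ (-(1:ℝ)/2) := by positivity
  unfold W Qstar
  rw [Real.log_div (by positivity) (by positivity), Real.log_mul h1.ne' (by positivity),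
    Real.log_mul h2.ne' (by positivity), Real.log_exp, Real.log_exp]
  have : Γ + N ≠ 0 := by positivity
  field_simp
  ring

lemma single_term (N Γ : ℝ) (hN : 0 < N) (hΓ : 0 < Γ) (x : ℝ) :
    MemLp (fun y => Real.log (W N x y / Qstar N Γ y)) 2 (gaussianReal x N.toNNReal) ∧
    variance (fun y => Real.log (W N x y / Qstar N Γ y)) (gaussianReal x N.toNNReal)
      = (Γ ^ 2 + 2 * N * x ^ 2) / (2 * (Γ + N) ^ 2) := by
  obtain ⟨c, hc⟩ := log_ratio N Γ hN hΓ x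
  simp_rw [hc]
  have hmap : (gaussianReal x N.toNNReal).map (fun y => y - x) = gaussianReal 0 N.toNNReal := by
    simp [gaussianReal_map_sub_const]
  set a := -Γ / (2 * N * (Γ + N)) with ha
  set b := x / (Γ + N) with hb
  have hm := gauss_quad_memLp N.toNNReal a b
  have hv := gauss_quad_var N.toNNReal a b
  rw [← hmap] at hm hv
  rw [memLp_map_measure_iff (by fun_prop) (by fun_prop)] at hm
  rw [variance_map (by fun_prop) (by fun_prop)] at hv
  refine ⟨hm.add (memLp_const c), ?_⟩
  rw [variance_add_const (by fun_prop)]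
  refine hv.trans ?_
  rw [Real.coe_toNNReal _ hN.le, ha, hb]
  have : Γ + N ≠ 0 := by positivity
  field_simp

/-- For independent `Yᵢ ~ N(xᵢ, N)`,
`Var(Σᵢ log(W(Yᵢ|xᵢ)/Q*(Yᵢ))) = (nΓ² + 2N‖x‖²)/(2(Γ+N)²)`. -/
theorem awgn_information_density_variance_sum (N Γ : ℝ) (hN : 0 < N) (hΓ : 0 < Γ)
    (n : ℕ) (hn : 1 ≤ n) (x : Fin n → ℝ) :
    variance (fun y : Fin n → ℝ => ∑ i, Real.log (W N (x i) (y i) / Qstar N Γ (y i)))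
        (Measure.pi fun i => gaussianReal (x i) N.toNNReal)
      = ((n : ℝ) * Γ^2 + 2 * N * ∑ i, (x i)^2) / (2 * (Γ + N)^2) := by
  have h := variance_sum_pi (μ := fun i => gaussianReal (x i) N.toNNReal)
    (X := fun i y => Real.log (W N (x i) y / Qstar N Γ y))
    (fun i => (single_term N Γ hN hΓ (x i)).1)
  have e : (fun y : Fin n → ℝ => ∑ i, Real.log (W N (x i) (y i) / Qstar N Γ (y i)))
      = ∑ i, fun y : Fin n → ℝ => Real.log (W N (x i) (y i) / Qstar N Γ (y i)) := by
    ext y; simp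
  rw [e, h]
  simp_rw [(single_term N Γ hN hΓ _).2]
  rw [← Finset.sum_div, Finset.sum_add_distrib, ← Finset.mul_sum]
  simp
end

section
/- Fix N > 0, n ≥ 2 and R > 0. Let X be uniformly distributed on the sphere {x ∈ ℝⁿ : ‖x‖ = R}, let Z ~ N(0, N·Iₙ) be independent of X, and let Q^cc denote the density of Y = X + Z, i.e. Q^cc(y) = ∫ (2πN)^{-n/2} exp(−‖y−x‖²/(2N)) dσ(x), σ being the uniform probability measure on the sphere. Then for every y ∈ ℝⁿ with y ≠ 0, Q^cc(y) = [Γ(n/2) / (√π · Γ((n−1)/2) · (2πN)^{n/2})] · exp(−(R² + ‖y‖²)/(2N)) · ∫_{−1}^{1} exp(R‖y‖t/N) (1−t²)^{(n−3)/2} dt, where Γ(·) is the Gamma function. (This is the closed form Q^cc(y) = [Γ(n/2)/(2(πN)^{n/2})] e^{−(R²+‖y‖²)/(2N)} (N/(R‖y‖))^{n/2−1} I_{n/2−1}(R‖y‖/N) with the modified Bessel function of the first kind I_ν replaced by its integral representation.) -/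
open Real MeasureTheory ProbabilityTheory

lemma weight_integral (v : ℝ) (hv : 0 < v) :
    ∫ t in (-1:ℝ)..1, (1 - t^2) ^ (v - 1) = √π * Real.Gamma v / Real.Gamma (v + 1/2) := by
  have h1 : beta v v = ∫ x in (0:ℝ)..1, x ^ (v-1) * (1-x)^(v-1) := by
    rw [beta_eq_betaIntegralReal v v hv hv, Complex.betaIntegral]
    rw [show (∫ x in (0:ℝ)..1, (x:ℂ) ^ ((v:ℂ)-1) * (1-(x:ℂ))^((v:ℂ)-1))
      = ∫ x in (0:ℝ)..1, ((x ^ (v-1) * (1-x)^(v-1) : ℝ) : ℂ) from ?_]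
    · rw [intervalIntegral.integral_ofReal, Complex.ofReal_re]
    · refine intervalIntegral.integral_congr fun x hx => ?_
      rw [Set.uIcc_of_le zero_le_one] at hx
      rw [Complex.ofReal_mul, Complex.ofReal_cpow hx.1, Complex.ofReal_cpow (by linarith [hx.2])]
      push_cast
      rfl
  have h2 := intervalIntegral.integral_comp_mul_sub (a := 0) (b := 1)
    (fun t : ℝ => (1 - t^2) ^ (v - 1)) (c := 2) (by norm_num) 1
  have h3 : ∫ x in (0:ℝ)..1, (1 - (2*x-1)^2) ^ (v - 1)
      = (4:ℝ)^(v-1) * ∫ x in (0:ℝ)..1, x ^ (v-1) * (1-x)^(v-1) := by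
    rw [← intervalIntegral.integral_const_mul]
    refine intervalIntegral.integral_congr fun x hx => ?_
    rw [Set.uIcc_of_le zero_le_one] at hx
    rw [← Real.mul_rpow hx.1 (by linarith [hx.2]),
      ← Real.mul_rpow (by norm_num) (mul_nonneg hx.1 (by linarith [hx.2]))]
    ring_nf
  rw [h3, ← h1] at h2
  norm_num at h2
  have h4 := Real.Gamma_mul_Gamma_add_half v
  have hg1 := (Real.Gamma_pos_of_pos hv).ne'
  have hg2 := (Real.Gamma_pos_of_pos (by linarith : 0 < v + 1/2)).ne'
  have hg3 := (Real.Gamma_pos_of_pos (by linarith : 0 < 2 * v)).ne'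
  have h5 : (4:ℝ)^(v-1) * 2 * (2:ℝ)^(1-2*v) = 1 := by
    have e4 : (4:ℝ)^(v-1) = (2:ℝ)^(2*(v-1)) := by
      rw [show (4:ℝ) = 2^(2:ℝ) by norm_num, ← Real.rpow_mul (by norm_num)]
    have e2 : (4:ℝ)^(v-1) * (2:ℝ)^(1-2*v) = (2:ℝ)^(-1:ℝ) := by
      rw [e4, ← Real.rpow_add (by norm_num)]
      congr 1
      ring
    rw [Real.rpow_neg_one] at e2
    linear_combination 2 * e2
  have h6 : ∫ t in (-1:ℝ)..1, (1 - t^2) ^ (v - 1) = 2 * ((4:ℝ)^(v-1) * beta v v) := by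
    linarith
  rw [h6, beta, ← two_mul v]
  rw [eq_div_iff hg2, show 2 * (4 ^ (v - 1) * (Gamma v * Gamma v / Gamma (2 * v))) * Gamma (v + 1 / 2)
    = 2 * 4 ^ (v - 1) * Gamma v * (Gamma v * Gamma (v + 1 / 2)) / Gamma (2 * v) by ring, h4,
    div_eq_iff hg3]
  linear_combination (Real.Gamma v * √π * Real.Gamma (2*v)) * h5

lemma weight_integrable (v : ℝ) (hv : 0 < v) :
    IntervalIntegrable (fun t : ℝ => (1 - t^2) ^ (v - 1)) volume (-1) 1 := by
  by_contra h
  have h1 := intervalIntegral.integral_undef h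
  rw [weight_integral v hv] at h1
  have hg1 := (Real.Gamma_pos_of_pos hv)
  have hg2 := (Real.Gamma_pos_of_pos (by linarith : 0 < v + 1/2))
  have : 0 < √π * Real.Gamma v / Real.Gamma (v + 1/2) := by positivity
  linarith

lemma weight_integrable_pow (v : ℝ) (hv : 0 < v) (k : ℕ) :
    IntervalIntegrable (fun t : ℝ => (1 - t^2) ^ (v - 1) * t^k) volume (-1) 1 :=
  (weight_integrable v hv).mul_continuousOn (by fun_prop)

lemma weight_rec (v : ℝ) (hv : 0 < v) (k : ℕ) :
    (k + 1) * (∫ t in (-1:ℝ)..1, (1 - t^2) ^ (v - 1) * t^k)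
      = (k + 1 + 2 * v) * ∫ t in (-1:ℝ)..1, (1 - t^2) ^ (v - 1) * t^(k+2) := by
  have key : ∫ t in (-1:ℝ)..1, ((k + 1) * ((1 - t^2) ^ (v - 1) * t^k)
      - (k + 1 + 2 * v) * ((1 - t^2) ^ (v - 1) * t^(k+2)))
      = (fun t : ℝ => t^(k+1) * (1 - t^2)^v) 1 - (fun t : ℝ => t^(k+1) * (1 - t^2)^v) (-1) := by
    refine intervalIntegral.integral_eq_sub_of_hasDerivAt_of_le
      (f := fun t : ℝ => t^(k+1) * (1 - t^2)^v)
      (f' := fun t : ℝ => (k + 1) * ((1 - t^2) ^ (v - 1) * t^k)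
        - (k + 1 + 2 * v) * ((1 - t^2) ^ (v - 1) * t^(k+2)))
      (by norm_num : (-1:ℝ) ≤ 1) ?_ ?_ ?_
    · refine ContinuousOn.mul (by fun_prop) (ContinuousOn.rpow_const (by fun_prop) ?_)
      intro x _; exact Or.inr hv.le
    · intro t ht
      have hp : 0 < 1 - t^2 := by nlinarith [ht.1, ht.2]
      have hd : HasDerivAt (fun t : ℝ => 1 - t^2) (-(2*t)) t := by
        simpa using (hasDerivAt_pow 2 t).const_sub 1
      have := (hasDerivAt_pow (k+1) t).mul (hd.rpow_const (p := v) (Or.inl hp.ne'))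
      refine this.congr_deriv ?_
      have e : (1 - t^2)^v = (1-t^2)^(v-1) * (1 - t^2) := by
        rw [← Real.rpow_add_one hp.ne']; ring_nf
      rw [e]
      push_cast
      ring
    · exact ((weight_integrable_pow v hv k).const_mul _).sub
        ((weight_integrable_pow v hv (k+2)).const_mul _)
  rw [intervalIntegral.integral_sub ((weight_integrable_pow v hv k).const_mul _)
        ((weight_integrable_pow v hv (k+2)).const_mul _),
      intervalIntegral.integral_const_mul, intervalIntegral.integral_const_mul] at key
  norm_num [Real.zero_rpow hv.ne'] at key
  linarith

lemma weight_one (v : ℝ) :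
    (∫ t in (-1:ℝ)..1, (1 - t^2) ^ (v - 1) * t^1) = 0 := by
  have := intervalIntegral.integral_comp_neg (a := -1) (b := 1)
    (fun t : ℝ => (1 - t^2) ^ (v - 1) * t^1)
  norm_num at this ⊢
  linarith

lemma exp_series {α : Type*} [MeasurableSpace α] (μ : Measure α) (f w : α → ℝ)
    (hf : Measurable f) (hw : Integrable w μ) (hb : ∀ᵐ a ∂μ, |f a| ≤ 1) (c : ℝ) :
    HasSum (fun k : ℕ => c^k / (k.factorial : ℝ) * ∫ a, w a * f a ^ k ∂μ)
      (∫ a, w a * Real.exp (c * f a) ∂μ) := by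
  have hs : Summable (fun k : ℕ => |c|^k / (k.factorial : ℝ)) := Real.summable_pow_div_factorial _
  simp_rw [← integral_const_mul]
  refine hasSum_integral_of_dominated_convergence
    (fun k a => |w a| * (|c|^k / (k.factorial : ℝ))) ?_ ?_ ?_ ?_ ?_
  · intro k
    exact ((hw.aestronglyMeasurable).mul (hf.pow_const k).aestronglyMeasurable).const_mul _
  · intro k
    filter_upwards [hb] with a ha
    rw [norm_mul, norm_mul, norm_div, norm_pow, norm_pow]
    simp only [Real.norm_eq_abs, Nat.abs_cast]
    have : |f a|^k ≤ 1 := pow_le_one₀ (abs_nonneg _) ha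
    have h2 : 0 ≤ |c|^k / (k.factorial : ℝ) := by positivity
    nlinarith [mul_le_mul_of_nonneg_left this (mul_nonneg (abs_nonneg (w a)) h2)]
  · filter_upwards with a using hs.mul_left _
  · simp_rw [tsum_mul_left]
    exact hw.abs.mul_const _
  · filter_upwards with a
    have := (NormedSpace.expSeries_div_hasSum_exp (c * f a)).mul_left (w a)
    rw [← Real.exp_eq_exp_ℝ] at this
    have e : (fun k : ℕ => c^k / (k.factorial : ℝ) * (w a * f a ^ k))
        = fun k : ℕ => w a * ((c * f a)^k / (k.factorial : ℝ)) := by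
      funext k
      rw [mul_pow]; ring
    rw [e]
    exact this

lemma rot_matrix {n : ℕ} (i j : Fin n) (hij : i ≠ j) (θ : ℝ) :
    ∃ A : Matrix (Fin n) (Fin n) ℝ, A * A.transpose = 1 ∧
      (∀ x, A.mulVec x i = cos θ * x i - sin θ * x j) ∧
      (∀ x, A.mulVec x j = sin θ * x i + cos θ * x j) := by
  have hcs := Real.sin_sq_add_cos_sq θ
  refine ⟨Matrix.of fun k => if k = i then cos θ • Pi.single i 1 - sin θ • Pi.single j 1
    else if k = j then sin θ • Pi.single i 1 + cos θ • Pi.single j 1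
    else Pi.single k 1, ?_, ?_, ?_⟩
  · ext a b
    rw [Matrix.mul_apply', Matrix.one_apply]
    change dotProduct (if a = i then _ else _) (if b = i then _ else _) = _
    by_cases hai : a = i <;> by_cases haj : a = j <;> by_cases hbi : b = i <;>
      by_cases hbj : b = j <;> by_cases hab : a = b <;>
      simp_all [sub_dotProduct, add_dotProduct, Pi.single_apply] <;>
      nlinarith [Real.sin_sq_add_cos_sq θ]
  · intro x
    change dotProduct (if i = i then _ else _) x = _
    rw [if_pos rfl, sub_dotProduct, smul_dotProduct, smul_dotProduct]
    simp
  · intro x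
    change dotProduct (if j = i then _ else _) x = _
    rw [if_neg hij.symm, if_pos rfl, add_dotProduct, smul_dotProduct, smul_dotProduct]
    simp

lemma align_matrix {n : ℕ} (i : Fin n) (y : Fin n → ℝ) (hy : y ≠ 0) :
    ∃ A : Matrix (Fin n) (Fin n) ℝ, A * A.transpose = 1 ∧
      (∀ x, ∑ k, y k * x k = √(∑ k, (y k)^2) * A.mulVec x i) := by
  set u : EuclideanSpace ℝ (Fin n) := WithLp.toLp 2 y with hu
  have hun : ‖u‖ = √(∑ k, (y k)^2) := by
    rw [EuclideanSpace.norm_eq]; simp [hu]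
  have hu0 : u ≠ 0 := by
    intro h; apply hy; simpa [hu] using h
  have hn0 : ‖u‖ ≠ 0 := norm_ne_zero_iff.mpr hu0
  obtain ⟨b, hb⟩ := Orthonormal.exists_orthonormalBasis_extension_of_card_eq (𝕜 := ℝ)
    (E := EuclideanSpace ℝ (Fin n)) (ι := Fin n) (by simp)
    (v := fun _ => (‖u‖⁻¹ : ℝ) • u) (s := {i}) (by
      rw [orthonormal_iff_ite]
      rintro ⟨a, rfl⟩ ⟨c, rfl⟩
      have h1 : ‖‖u‖⁻¹ • u‖ = 1 := by
        rw [norm_smul, norm_inv, norm_norm, inv_mul_cancel₀ hn0]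
      simp only [Set.domRestrict_apply, if_true]
      rw [real_inner_self_eq_norm_sq, h1, one_pow])
  refine ⟨Matrix.of fun k l => b k l, ?_, ?_⟩
  · ext a c
    have := orthonormal_iff_ite.mp b.orthonormal a c
    rw [Matrix.one_apply, ← this, Matrix.mul_apply]
    simp [PiLp.inner_apply, mul_comm]
  · intro x
    have hbi := hb i rfl
    simp only [Matrix.mulVec, dotProduct, Matrix.of_apply, hbi, ← hun, Finset.mul_sum]
    refine Finset.sum_congr rfl fun k _ => ?_
    have : u k = y k := rfl
    rw [PiLp.smul_apply, this, smul_eq_mul]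
    field_simp

section sphere
variable {n : ℕ} {R : ℝ} {σ : Measure (Fin n → ℝ)}

lemma sphere_bound (hR : 0 < R)
    (hσsupp : σ ({x : Fin n → ℝ | ∑ i, (x i)^2 = R^2})ᶜ = 0) :
    ∀ᵐ x ∂σ, ∀ i, |x i| ≤ R := by
  have h : ∀ᵐ x ∂σ, ∑ i, (x i)^2 = R^2 := hσsupp
  filter_upwards [h] with x hx i
  apply abs_le_of_sq_le_sq _ hR.le
  rw [← hx]
  exact Finset.single_le_sum (f := fun i => (x i)^2) (fun i _ => sq_nonneg _) (Finset.mem_univ i)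

lemma inv_integral
    (hσinv : ∀ A : Matrix (Fin n) (Fin n) ℝ, A * A.transpose = 1 → σ.map (A.mulVec) = σ)
    (A : Matrix (Fin n) (Fin n) ℝ) (hA : A * A.transpose = 1) (f : (Fin n → ℝ) → ℝ)
    (hf : Measurable f) : ∫ x, f (A.mulVec x) ∂σ = ∫ x, f x ∂σ := by
  have hm : Measurable A.mulVec := (Continuous.matrix_mulVec continuous_const continuous_id).measurable
  conv_rhs => rw [← hσinv A hA]
  rw [integral_map hm.aemeasurable hf.aestronglyMeasurable]

lemma sphere_rot [IsProbabilityMeasure σ] (hR : 0 < R)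
    (hσsupp : σ ({x : Fin n → ℝ | ∑ i, (x i)^2 = R^2})ᶜ = 0)
    (hσinv : ∀ A : Matrix (Fin n) (Fin n) ℝ, A * A.transpose = 1 → σ.map (A.mulVec) = σ)
    (i j : Fin n) (hij : i ≠ j) (k : ℕ) :
    ∫ x, ((x i)^(k+2) - (k+1) * (x i)^k * (x j)^2) ∂σ = 0 := by
  have hb := sphere_bound hR hσsupp
  have hcont : ∀ θ : ℝ, Continuous (fun x : Fin n → ℝ =>
      (cos θ * x i - sin θ * x j)^(k+1) * (sin θ * x i + cos θ * x j)) := by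
    intro θ; fun_prop
  have habs : ∀ θ a b : ℝ, |a| ≤ R → |b| ≤ R →
      |cos θ * a - sin θ * b| ≤ 2 * R ∧ |sin θ * a + cos θ * b| ≤ 2 * R := by
    intro θ a b ha hb
    have c1 := Real.abs_cos_le_one θ
    have s1 := Real.abs_sin_le_one θ
    have h1 : |cos θ * a| ≤ R := by
      rw [abs_mul]; nlinarith [abs_nonneg a, abs_nonneg (cos θ)]
    have h2 : |sin θ * b| ≤ R := by
      rw [abs_mul]; nlinarith [abs_nonneg b, abs_nonneg (sin θ)]
    have h3 : |sin θ * a| ≤ R := by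
      rw [abs_mul]; nlinarith [abs_nonneg a, abs_nonneg (sin θ)]
    have h4 : |cos θ * b| ≤ R := by
      rw [abs_mul]; nlinarith [abs_nonneg b, abs_nonneg (cos θ)]
    exact ⟨(abs_sub _ _).trans (by linarith), (abs_add_le _ _).trans (by linarith)⟩
  have hder := (hasDerivAt_integral_of_dominated_loc_of_deriv_le (μ := σ) (x₀ := (0:ℝ))
    (s := Set.univ)
    (F := fun θ x => (cos θ * x i - sin θ * x j)^(k+1) * (sin θ * x i + cos θ * x j))
    (F' := fun θ x => (cos θ * x i - sin θ * x j)^(k+2)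
      - (k+1) * (cos θ * x i - sin θ * x j)^k * (sin θ * x i + cos θ * x j)^2)
    (bound := fun _ => (2*R)^(k+2) + (k+1) * (2*R)^k * (2*R)^2)
    Filter.univ_mem
    (Filter.Eventually.of_forall fun θ => (hcont θ).aestronglyMeasurable) ?_
    (Continuous.aestronglyMeasurable (by fun_prop)) ?_ (integrable_const _) ?_).2
  · have hconst : (fun θ : ℝ => ∫ x, (cos θ * x i - sin θ * x j)^(k+1)
        * (sin θ * x i + cos θ * x j) ∂σ) = fun _ => ∫ x, (x i)^(k+1) * x j ∂σ := by
      funext θ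
      obtain ⟨A, hA, h1, h2⟩ := rot_matrix i j hij θ
      rw [← inv_integral hσinv A hA (fun x => (x i)^(k+1) * x j) (by fun_prop)]
      simp only [h1, h2]
    rw [hconst] at hder
    have := hder.unique (hasDerivAt_const _ _)
    simpa using this
  · refine Integrable.of_bound (hcont 0).aestronglyMeasurable ((2*R)^(k+1) * (2*R)) ?_
    filter_upwards [hb] with x hx
    obtain ⟨h1, h2⟩ := habs 0 _ _ (hx i) (hx j)
    rw [Real.norm_eq_abs, abs_mul, abs_pow]
    gcongr
  · filter_upwards [hb] with x hx θ _
    obtain ⟨h1, h2⟩ := habs θ _ _ (hx i) (hx j)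
    rw [Real.norm_eq_abs]
    refine (abs_sub _ _).trans ?_
    rw [abs_mul, abs_mul, abs_pow, abs_pow, abs_pow, abs_of_nonneg (by positivity : (0:ℝ) ≤ k+1)]
    gcongr
  · filter_upwards with x θ _
    have hp : HasDerivAt (fun θ => cos θ * x i - sin θ * x j) (-sin θ * x i - cos θ * x j) θ :=
      ((hasDerivAt_cos θ).mul_const _).sub ((hasDerivAt_sin θ).mul_const _)
    have hq : HasDerivAt (fun θ => sin θ * x i + cos θ * x j) (cos θ * x i + -sin θ * x j) θ :=
      ((hasDerivAt_sin θ).mul_const _).add ((hasDerivAt_cos θ).mul_const _)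
    refine ((hp.pow (k+1)).mul hq).congr_deriv ?_
    simp only [Nat.add_sub_cancel, Pi.pow_apply]
    push_cast
    ring

lemma sphere_rec [IsProbabilityMeasure σ] (hR : 0 < R)
    (hσsupp : σ ({x : Fin n → ℝ | ∑ i, (x i)^2 = R^2})ᶜ = 0)
    (hσinv : ∀ A : Matrix (Fin n) (Fin n) ℝ, A * A.transpose = 1 → σ.map (A.mulVec) = σ)
    (i : Fin n) (k : ℕ) :
    (k + 1) * R^2 * (∫ x, (x i)^k ∂σ) = (k + n) * ∫ x, (x i)^(k+2) ∂σ := by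
  have hb := sphere_bound hR hσsupp
  have hs : ∀ᵐ x ∂σ, ∑ i, (x i)^2 = R^2 := hσsupp
  have hi : ∀ j (p q : ℕ), Integrable (fun x => (x i)^p * (x j)^q) σ := by
    intro j p q
    refine Integrable.of_bound (Continuous.aestronglyMeasurable (by fun_prop)) (R^p * R^q) ?_
    filter_upwards [hb] with x hx
    rw [Real.norm_eq_abs, abs_mul, abs_pow, abs_pow]
    have := hx i
    have := hx j
    gcongr
  have hi' : ∀ p : ℕ, Integrable (fun x => (x i)^p) σ := fun p => by simpa using hi i p 0
  have h1 : ∀ j, j ≠ i → (k+1) * ∫ x, (x i)^k * (x j)^2 ∂σ = ∫ x, (x i)^(k+2) ∂σ := by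
    intro j hj
    have := sphere_rot hR hσsupp hσinv i j hj.symm k
    simp_rw [mul_assoc] at this
    rw [integral_sub (hi' _) ((hi j k 2).const_mul _), integral_const_mul] at this
    linarith
  have h2 : ∑ j, ∫ x, (x i)^k * (x j)^2 ∂σ = R^2 * ∫ x, (x i)^k ∂σ := by
    rw [← integral_finsetSum _ (fun j _ => hi j k 2), ← integral_const_mul]
    refine integral_congr_ae ?_
    filter_upwards [hs] with x hx
    rw [← Finset.mul_sum, hx, mul_comm]
  rw [← Finset.add_sum_erase _ _ (Finset.mem_univ i)] at h2
  have h3 : (k+1) * ∑ j ∈ Finset.univ.erase i, ∫ x, (x i)^k * (x j)^2 ∂σ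
      = (n - 1) * ∫ x, (x i)^(k+2) ∂σ := by
    rw [Finset.mul_sum, Finset.sum_congr rfl (fun j hj => h1 j (Finset.ne_of_mem_erase hj))]
    have : 1 ≤ n := by have := i.2; omega
    simp [Finset.card_erase_of_mem, Nat.cast_sub this]
  simp_rw [← pow_add] at h2
  linear_combination -(k+1:ℝ) * h2 + h3

lemma sphere_one
    (hσinv : ∀ A : Matrix (Fin n) (Fin n) ℝ, A * A.transpose = 1 → σ.map (A.mulVec) = σ)
    (i : Fin n) : ∫ x, (x i)^1 ∂σ = 0 := by
  have := inv_integral hσinv (-1) (by simp) (fun x => (x i)^1) (by fun_prop)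
  simp only [Matrix.neg_mulVec, Matrix.one_mulVec, Pi.neg_apply, pow_one, integral_neg] at this ⊢
  linarith

lemma moments [IsProbabilityMeasure σ] (hn : 2 ≤ n) (hR : 0 < R)
    (hσsupp : σ ({x : Fin n → ℝ | ∑ i, (x i)^2 = R^2})ᶜ = 0)
    (hσinv : ∀ A : Matrix (Fin n) (Fin n) ℝ, A * A.transpose = 1 → σ.map (A.mulVec) = σ)
    (i : Fin n) (v : ℝ) (hv : v = ((n:ℝ) - 1) / 2) (k : ℕ) :
    ∫ x, 1 * (x i / R)^k ∂σ = (Real.Gamma (v+1/2) / (√π * Real.Gamma v))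
      * ∫ t in (-1:ℝ)..1, (1 - t^2) ^ (v - 1) * t^k := by
  have hn' : (2:ℝ) ≤ n := by exact_mod_cast hn
  have hv0 : 0 < v := by rw [hv]; linarith
  simp only [one_mul, div_pow, integral_div]
  induction k using Nat.twoStepInduction with
  | zero =>
    have hg1 := (Real.Gamma_pos_of_pos hv0).ne'
    have hg2 := (Real.Gamma_pos_of_pos (by linarith : 0 < v + 1/2)).ne'
    have hpi : √π ≠ 0 := by positivity
    simp only [pow_zero, mul_one]
    rw [weight_integral v hv0]
    simp
    field_simp
  | one => rw [weight_one, sphere_one hσinv]; simp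
  | more k ih _ =>
    have h1 := sphere_rec hR hσsupp hσinv i k
    have h2 := weight_rec v hv0 k
    rw [show (k:ℝ) + 1 + 2 * v = k + n by rw [hv]; ring] at h2
    have hkn : (k + n : ℝ) ≠ 0 := by positivity
    rw [← mul_right_inj' hkn, mul_left_comm, ← h2, ← mul_div_assoc, ← h1,
      mul_left_comm, ← ih, pow_add]
    field_simp

end sphere

theorem Qcc_closed_form (N : ℝ) (hN : 0 < N) (n : ℕ) (hn : 2 ≤ n) (R : ℝ) (hR : 0 < R)
    (σ : Measure (Fin n → ℝ)) (hσprob : IsProbabilityMeasure σ)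
    (hσsupp : σ ({x : Fin n → ℝ | ∑ i, (x i)^2 = R^2})ᶜ = 0)
    (hσinv : ∀ A : Matrix (Fin n) (Fin n) ℝ, A * A.transpose = 1 →
      σ.map (A.mulVec) = σ) :
    ∀ y : Fin n → ℝ, y ≠ 0 →
      (∫ x, (2 * π * N) ^ (-(n : ℝ)/2) * Real.exp (-(∑ i, (y i - x i)^2) / (2 * N)) ∂σ)
        = (Real.Gamma (n/2) /
            (Real.sqrt π * Real.Gamma ((n - 1)/2) * (2 * π * N) ^ ((n : ℝ)/2)))
          * Real.exp (-(R^2 + ∑ i, (y i)^2) / (2 * N))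
          * ∫ t in (-1:ℝ)..1,
              Real.exp (R * Real.sqrt (∑ i, (y i)^2) * t / N) * (1 - t^2) ^ (((n : ℝ) - 3)/2) := by
  intro y hy
  have hn' : (2:ℝ) ≤ n := by exact_mod_cast hn
  set v : ℝ := ((n:ℝ) - 1) / 2 with hv
  have hv0 : 0 < v := by rw [hv]; linarith
  let i : Fin n := ⟨0, by omega⟩
  set S := √(∑ i, (y i)^2) with hS
  obtain ⟨A, hA, hAy⟩ := align_matrix i y hy
  have hb := sphere_bound hR hσsupp
  have hs : ∀ᵐ x ∂σ, ∑ i, (x i)^2 = R^2 := hσsupp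
  have e1 := exp_series σ (fun x => x i / R) (fun _ => 1) (by fun_prop) (integrable_const _)
    (by
      filter_upwards [hb] with x hx
      rw [abs_div, abs_of_pos hR]
      exact (div_le_one hR).mpr (hx i)) (R * S / N)
  have e2 := exp_series (volume.restrict (Set.Ioc (-1:ℝ) 1)) (fun t => t)
    (fun t => (1 - t^2)^(v-1)) (by fun_prop)
    ((intervalIntegrable_iff_integrableOn_Ioc_of_le (by norm_num)).mp (weight_integrable v hv0))
    (by
      rw [ae_restrict_iff' measurableSet_Ioc]
      filter_upwards with t ht
      exact abs_le.mpr ⟨ht.1.le, ht.2⟩) (R * S / N)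
  simp_rw [← intervalIntegral.integral_of_le (show (-1:ℝ) ≤ 1 by norm_num)] at e2
  simp_rw [moments hn hR hσsupp hσinv i v hv] at e1
  have e3 := e2.mul_left (Real.Gamma (v+1/2) / (√π * Real.Gamma v))
  have key : ∫ x, Real.exp (R * S / N * (x i / R)) ∂σ
      = (Real.Gamma (v+1/2) / (√π * Real.Gamma v)) *
        ∫ t in (-1:ℝ)..1, (1 - t^2)^(v-1) * Real.exp (R * S / N * t) := by
    have ef : (fun k : ℕ => (R * S / N)^k / (k.factorial : ℝ) *
        (Real.Gamma (v+1/2) / (√π * Real.Gamma v) *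
          ∫ t in (-1:ℝ)..1, (1 - t^2) ^ (v - 1) * t^k))
        = fun k : ℕ => Real.Gamma (v+1/2) / (√π * Real.Gamma v) *
          ((R * S / N)^k / (k.factorial : ℝ) *
            ∫ t in (-1:ℝ)..1, (1 - t^2) ^ (v - 1) * t^k) := by
      funext k; ring
    rw [ef] at e1
    have e4 := e1.unique e3
    simpa only [one_mul] using e4
  have hL : ∫ x, (2 * π * N) ^ (-(n : ℝ)/2) * Real.exp (-(∑ i, (y i - x i)^2) / (2 * N)) ∂σ
      = (2 * π * N) ^ (-(n : ℝ)/2) * Real.exp (-(R^2 + ∑ i, (y i)^2) / (2 * N)) *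
        ∫ x, Real.exp (R * S / N * (x i / R)) ∂σ := by
    rw [← inv_integral hσinv A hA (fun x => Real.exp (R * S / N * (x i / R))) (by fun_prop),
      ← integral_const_mul]
    refine integral_congr_ae ?_
    filter_upwards [hs] with x hx
    rw [mul_assoc _ (Real.exp _) (Real.exp _), ← Real.exp_add]
    congr 2
    have h1 : ∑ i, (y i - x i)^2 = ∑ i, (y i)^2 - 2 * ∑ i, y i * x i + ∑ i, (x i)^2 := by
      rw [Finset.mul_sum, ← Finset.sum_sub_distrib, ← Finset.sum_add_distrib]
      refine Finset.sum_congr rfl fun k _ => by ring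
    rw [h1, hAy, hx, ← hS]
    field_simp
    ring
  rw [hL, key, neg_div, Real.rpow_neg (by positivity), show v + 1/2 = n/2 by rw [hv]; ring]
  have hI : ∫ t in (-1:ℝ)..1, Real.exp (R * S * t / N) * (1 - t^2) ^ (((n : ℝ) - 3)/2)
      = ∫ t in (-1:ℝ)..1, (1 - t^2)^(v-1) * Real.exp (R * S / N * t) := by
    refine intervalIntegral.integral_congr fun t _ => ?_
    rw [show ((n : ℝ) - 3)/2 = v - 1 by rw [hv]; ring, mul_comm]
    congr 2
    ring
  rw [hI]
  generalize (∫ t in (-1:ℝ)..1, (1 - t^2)^(v-1) * Real.exp (R * S / N * t)) = I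
  rw [div_mul_eq_div_div _ (√π * Real.Gamma v)]
  ring
end

section
/- Fix N > 0 and Γ > 0. There exist positive constants C, n₀, ε₀ (with ε₀ < Γ) and Δ₀ such that for all integers n ≥ n₀, all real ε with |ε| ≤ ε₀, and all real Δ with 0 ≤ Δ ≤ Δ₀: for every y ∈ ℝⁿ with Γ + N − Δ ≤ ‖y‖²/n ≤ Γ + N + Δ, one has | log( Q^cc_{Γ+ε,n}(y) / Q^cc_{Γ,n}(y) ) | ≤ C·( log n + n·ε² + n·Δ² + n·|ε|·Δ ). -/
open Real MeasureTheory ProbabilityTheory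

/-- `UniformSphereFamily N σ`: `σ n R` is, for every `n ≥ 1` and `R > 0`, the unique
rotation-invariant (uniform) Borel probability measure on the sphere of radius `R`
in `ℝⁿ`. -/
def UniformSphereFamily (σ : ∀ n : ℕ, ℝ → Measure (Fin n → ℝ)) : Prop :=
  ∀ (n : ℕ), 1 ≤ n → ∀ R : ℝ, 0 < R →
    IsProbabilityMeasure (σ n R) ∧
    σ n R ({x : Fin n → ℝ | ∑ i, (x i)^2 = R^2})ᶜ = 0 ∧
    ∀ A : Matrix (Fin n) (Fin n) ℝ, A * A.transpose = 1 →
      (σ n R).map (A.mulVec) = σ n R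

/-- `Qcc σ N Γ' n`: the density on `ℝⁿ` of `Y = X + Z`, where `X` is uniform on the
sphere of radius `√(nΓ')` and `Z ~ N(0, N·Iₙ)` is independent of `X`. -/
noncomputable def Qcc (σ : ∀ n : ℕ, ℝ → Measure (Fin n → ℝ)) (N Γ' : ℝ) (n : ℕ)
    (y : Fin n → ℝ) : ℝ :=
  ∫ x, (2 * π * N) ^ (-(n : ℝ)/2) * Real.exp (-(∑ i, (y i - x i)^2) / (2 * N))
    ∂(σ n (Real.sqrt (n * Γ')))


noncomputable def rotMat {n : ℕ} (i j : Fin n) (θ : ℝ) : Matrix (Fin n) (Fin n) ℝ :=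
  1 + Matrix.single i i (cos θ - 1) +
      Matrix.single j j (cos θ - 1) + Matrix.single i j (sin θ) + Matrix.single j i (-sin θ)

lemma rotMat_orth {n : ℕ} (i j : Fin n) (hij : i ≠ j) (θ : ℝ) :
    rotMat i j θ * (rotMat i j θ).transpose = 1 := by
  have hsc := sin_sq_add_cos_sq θ
  simp only [rotMat, Matrix.transpose_add, Matrix.transpose_single, Matrix.transpose_one, mul_add,
        add_mul, mul_one, one_mul, Matrix.single_mul_single_same, ne_eq, hij, hij.symm,
        not_false_eq_true, Matrix.single_mul_single_of_ne]
  ext a b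
  simp only [Matrix.add_apply, Matrix.single_apply, Matrix.zero_apply]
  have hone : (1 : Matrix (Fin n) (Fin n) ℝ) a b = if a = b then 1 else 0 := Matrix.one_apply
  simp only [hone]
  by_cases hai : i = a
  · subst hai
    by_cases hbi : i = b
    · subst hbi
      simp [hij, hij.symm]; linarith
    · by_cases hbj : j = b
      · subst hbj
        simp [hij, hij.symm]; linarith
      · simp [hij, hij.symm, hbi, hbj]
  · by_cases haj : j = a
    · subst haj
      by_cases hbi : i = b
      · subst hbi
        simp [hij, hij.symm]; linarith
      · by_cases hbj : j = b
        · subst hbj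
          simp [hij]; linarith
        · simp [hij, hbi, hbj]
    · simp [hai, haj]

lemma rotMat_mulVec {n : ℕ} (i j : Fin n) (hij : i ≠ j) (θ : ℝ) (x : Fin n → ℝ) (k : Fin n) :
    ((rotMat i j θ).mulVec x) k =
      x k + (if k = i then (cos θ - 1) * x i + sin θ * x j else 0)
        + (if k = j then (cos θ - 1) * x j - sin θ * x i else 0) := by
  simp only [rotMat, Matrix.add_mulVec, Matrix.single_mulVec, Pi.add_apply, Matrix.one_mulVec,
        Function.update_apply, Pi.zero_apply]
  by_cases h1 : k = i
  · subst h1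
    simp [hij]; ring
  · by_cases h2 : k = j
    · subst h2
      simp [hij.symm]; ring
    · simp [h1, h2]

lemma rot_identity {n : ℕ} (μ : Measure (Fin n → ℝ)) [IsProbabilityMeasure μ] (R : ℝ)
    (hs : μ ({x : Fin n → ℝ | ∑ i, (x i)^2 = R^2})ᶜ = 0)
    (hinv : ∀ A : Matrix (Fin n) (Fin n) ℝ, A * A.transpose = 1 → μ.map (A.mulVec) = μ)
    (y : Fin n → ℝ) (t : ℝ) (i j : Fin n) (hij : i ≠ j) :
    ∫ x, (-(x i) + x j * (t * (y i * x j - y j * x i))) * exp (t * ∑ k, y k * x k) ∂μ = 0 := by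
  set S : Set (Fin n → ℝ) := {x : Fin n → ℝ | ∑ i, (x i)^2 = R^2} with hS
  have hae : ∀ᵐ x ∂μ, x ∈ S := by
    rw [ae_iff]; exact hs
  have hScomp : IsCompact S := by
    refine Metric.isCompact_of_isClosed_isBounded ?_ ?_
    · exact isClosed_eq (by fun_prop) (by fun_prop)
    · refine (Metric.isBounded_closedBall (x := (0 : Fin n → ℝ)) (r := |R|)).subset ?_
      intro x hx
      rw [mem_closedBall_zero_iff, pi_norm_le_iff_of_nonneg (abs_nonneg R)]
      intro k
      rw [Real.norm_eq_abs]
      apply sq_le_sq.mp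
      have h1 : (x k)^2 ≤ ∑ i, (x i)^2 :=
        Finset.single_le_sum (f := fun i => (x i)^2) (fun i _ => sq_nonneg _) (Finset.mem_univ k)
      have h2 : ∑ i, (x i)^2 = R^2 := hx
      linarith
  -- the flow
  let F : ℝ → (Fin n → ℝ) → ℝ := fun θ x =>
    (cos θ * x j - sin θ * x i) * exp (t * ((∑ k, y k * x k) - y i * x i - y j * x j
      + y i * (cos θ * x i + sin θ * x j) + y j * (cos θ * x j - sin θ * x i)))
  let F' : ℝ → (Fin n → ℝ) → ℝ := fun θ x =>
    (-(cos θ * x i + sin θ * x j) + (cos θ * x j - sin θ * x i) *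
      (t * (y i * (cos θ * x j - sin θ * x i) - y j * (cos θ * x i + sin θ * x j))))
     * exp (t * ((∑ k, y k * x k) - y i * x i - y j * x j
      + y i * (cos θ * x i + sin θ * x j) + y j * (cos θ * x j - sin θ * x i)))
  have hFF' : ∀ θ x, HasDerivAt (fun θ => F θ x) (F' θ x) θ := by
    intro θ x
    have hu : HasDerivAt (fun θ => cos θ * x i + sin θ * x j) (cos θ * x j - sin θ * x i) θ := by
      have := ((hasDerivAt_cos θ).mul_const (x i)).add ((hasDerivAt_sin θ).mul_const (x j))
      exact this.congr_deriv (by ring)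
    have hw : HasDerivAt (fun θ => cos θ * x j - sin θ * x i) (-(cos θ * x i + sin θ * x j)) θ := by
      have := ((hasDerivAt_cos θ).mul_const (x j)).sub ((hasDerivAt_sin θ).mul_const (x i))
      exact this.congr_deriv (by ring)
    have he := (((((hu.const_mul (y i)).const_add
      ((∑ k, y k * x k) - y i * x i - y j * x j)).add (hw.const_mul (y j))).const_mul t).exp)
    have := hw.mul he
    refine this.congr_deriv ?_
    simp only [F', Pi.add_apply]
    ring
  have hFc : ∀ θ, Continuous (F θ) := fun θ => by simp only [F]; fun_prop
  have hF'c : Continuous (fun p : ℝ × (Fin n → ℝ) => F' p.1 p.2) := by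
    simp only [F']; fun_prop
  obtain ⟨B, hB⟩ := ((isCompact_Icc (a := (-1 : ℝ)) (b := 1)).prod hScomp).exists_bound_of_continuousOn
    hF'c.continuousOn
  have hF0int : Integrable (F 0) μ := by
    obtain ⟨B0, hB0⟩ := hScomp.exists_bound_of_continuousOn (hFc 0).continuousOn
    exact Integrable.of_bound (hFc 0).aestronglyMeasurable B0 (hae.mono fun x hx => hB0 x hx)
  have hder := (hasDerivAt_integral_of_dominated_loc_of_deriv_le (μ := μ) (F := F) (F' := F')
    (x₀ := 0) (s := Set.Icc (-1) 1) (bound := fun _ => B) (Icc_mem_nhds (by norm_num) (by norm_num))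
    (Filter.Eventually.of_forall fun θ => (hFc θ).aestronglyMeasurable) hF0int
    (hF'c.comp (by fun_prop : Continuous fun x : Fin n → ℝ => ((0 : ℝ), x))).aestronglyMeasurable
    (hae.mono fun x hx θ hθ => hB (θ, x) ⟨hθ, hx⟩) (integrable_const B)
    (Filter.Eventually.of_forall fun x θ _ => hFF' θ x)).2
  have hconst : ∀ θ, ∫ x, F θ x ∂μ = ∫ x, F 0 x ∂μ := by
    intro θ
    set A := rotMat i j θ with hAdef
    have hA : A * A.transpose = 1 := rotMat_orth i j hij θ
    have hAi : ∀ x k, A.mulVec x k = _ := rotMat_mulVec i j hij θ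
    have hmap := hinv A hA
    have : ∫ x, F 0 x ∂μ = ∫ x, F 0 (A.mulVec x) ∂μ := by
      conv_lhs => rw [← hmap]
      rw [integral_map]
      · exact (Continuous.matrix_mulVec continuous_const continuous_id).aemeasurable
      · exact (hFc 0).aestronglyMeasurable
    rw [this]
    congr 1
    ext x
    have hsum : ∑ k, y k * (A.mulVec x) k = (∑ k, y k * x k) +
       y i * ((cos θ - 1) * x i + sin θ * x j) + y j * ((cos θ - 1) * x j - sin θ * x i) := by
      simp only [hAi, mul_add, Finset.sum_add_distrib, mul_ite, mul_zero, Finset.sum_ite_eq',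
        Finset.mem_univ, if_true]
    simp only [F, hsum]
    simp only [cos_zero, sin_zero, hAi, if_true, hij, hij.symm, if_false]
    congr 1
    · ring
    · congr 1; ring
  have hder2 : HasDerivAt (fun θ => ∫ x, F θ x ∂μ) 0 0 := by
    have : (fun θ => ∫ x, F θ x ∂μ) = fun _ => ∫ x, F 0 x ∂μ := funext hconst
    rw [this]; exact hasDerivAt_const _ _
  have := hder.unique hder2
  rw [← this]
  congr 1
  ext x
  simp only [F', cos_zero, sin_zero]
  ring_nf

lemma sphere_identity {n : ℕ} (μ : Measure (Fin n → ℝ)) [IsProbabilityMeasure μ] (R : ℝ)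
    (hs : μ ({x : Fin n → ℝ | ∑ i, (x i)^2 = R^2})ᶜ = 0)
    (hinv : ∀ A : Matrix (Fin n) (Fin n) ℝ, A * A.transpose = 1 → μ.map (A.mulVec) = μ)
    (y : Fin n → ℝ) (hy : (∑ i, (y i)^2) * R^2 = 1) (t : ℝ) :
    ∫ x, (((n : ℝ) - 1) * (∑ k, y k * x k) + t * (∑ k, y k * x k)^2 - t)
      * exp (t * ∑ k, y k * x k) ∂μ = 0 := by
  have hae : ∀ᵐ x ∂μ, ∑ i, (x i)^2 = R^2 := by
    rw [ae_iff]; exact hs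
  have hbd : ∀ᵐ x ∂μ, ∀ k, |x k| ≤ |R| := by
    filter_upwards [hae] with x hx k
    apply sq_le_sq.mp
    have h1 : (x k)^2 ≤ ∑ i, (x i)^2 :=
      Finset.single_le_sum (f := fun i => (x i)^2) (fun i _ => sq_nonneg _) (Finset.mem_univ k)
    linarith
  have key : ∀ i j : Fin n, ∫ x, (if i = j then 0 else
      y i * ((-(x i) + x j * (t * (y i * x j - y j * x i))) * exp (t * ∑ k, y k * x k))) ∂μ = 0 := by
    intro i j
    by_cases h : i = j
    · simp [h]
    · simp only [h, if_false]
      rw [integral_const_mul, rot_identity μ R hs hinv y t i j h, mul_zero]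
  have hint : ∀ i j : Fin n, Integrable (fun x : Fin n → ℝ => (if i = j then 0 else
      y i * ((-(x i) + x j * (t * (y i * x j - y j * x i))) * exp (t * ∑ k, y k * x k)))) μ := by
    intro i j
    by_cases h : i = j
    · simp [h]
    · simp only [h, if_false]
      have hc : Continuous (fun x : Fin n → ℝ =>
        y i * ((-(x i) + x j * (t * (y i * x j - y j * x i))) * exp (t * ∑ k, y k * x k))) := by
        fun_prop
      obtain ⟨B0, hB0⟩ := (isCompact_closedBall (0 : Fin n → ℝ) |R|).exists_bound_of_continuousOn
        hc.continuousOn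
      refine Integrable.of_bound hc.aestronglyMeasurable B0 ?_
      filter_upwards [hbd] with x hx
      apply hB0
      rw [mem_closedBall_zero_iff, pi_norm_le_iff_of_nonneg (abs_nonneg R)]
      exact hx
  have htot : ∫ x, ∑ i, ∑ j, (if i = j then 0 else
      y i * ((-(x i) + x j * (t * (y i * x j - y j * x i))) * exp (t * ∑ k, y k * x k))) ∂μ = 0 := by
    rw [integral_finsetSum _ (fun i _ => integrable_finsetSum _ (fun j _ => hint i j))]
    apply Finset.sum_eq_zero
    intro i _
    rw [integral_finsetSum _ (fun j _ => hint i j)]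
    exact Finset.sum_eq_zero fun j _ => key i j
  rw [← neg_eq_zero, ← integral_neg, ← htot]
  apply integral_congr_ae
  filter_upwards [hae] with x hx
  set E := exp (t * ∑ k, y k * x k)
  have e1 : ∀ i j : Fin n, (if i = j then 0 else
      y i * ((-(x i) + x j * (t * (y i * x j - y j * x i))) * E)) =
      (-(y i * x i) + t * ((y i)^2 * (x j)^2) - t * ((y i * x i) * (y j * x j))) * E
       + if i = j then y i * x i * E else 0 := by
    intro i j
    by_cases h : i = j
    · subst h; simp; ring
    · simp [h]; ring
  simp only [e1, Finset.sum_add_distrib, ← Finset.sum_mul, Finset.sum_sub_distrib,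
    Finset.sum_neg_distrib, ← Finset.mul_sum, Finset.sum_ite_eq, Finset.mem_univ, if_true, hx,
    Finset.sum_const, Finset.card_univ, Fintype.card_fin, nsmul_eq_mul, hy, mul_neg, ← mul_add, ← mul_sub]
  have e3 : ∑ k, (n : ℝ) * y k * x k = n * ∑ k, y k * x k := by
    rw [Finset.mul_sum]; exact Finset.sum_congr rfl fun k _ => by ring
  rw [e3]
  ring

lemma integral_comb {α : Type*} [MeasurableSpace α] {μ : Measure α} {f g h : α → ℝ}
    (hf : Integrable f μ) (hg : Integrable g μ) (hh : Integrable h μ) {a b c : ℝ} :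
    ∫ x, (a * f x + b * g x + c * h x) ∂μ = a * ∫ x, f x ∂μ + b * ∫ x, g x ∂μ + c * ∫ x, h x ∂μ := by
  have h1 : Integrable (fun x => a * f x + b * g x) μ := (hf.const_mul a).add (hg.const_mul b)
  rw [integral_add h1 (hh.const_mul c), integral_add (hf.const_mul a) (hg.const_mul b),
    integral_const_mul, integral_const_mul, integral_const_mul]

/-- One-dimensional data: `G0, G1, G2` are a moment generating function and its first two
derivatives, satisfying the Bessel-type ODE. -/
structure SphSys (p : ℝ) (G0 G1 G2 : ℝ → ℝ) : Prop where
  d0 : ∀ t, HasDerivAt G0 (G1 t) t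
  d1 : ∀ t, HasDerivAt G1 (G2 t) t
  ode : ∀ t, p * G1 t + t * G2 t = t * G0 t
  zero : G0 0 = 1
  pos : ∀ t, 0 < G0 t
  le : ∀ t, G1 t ≤ G0 t
  cs : ∀ t, G1 t ^ 2 ≤ G0 t * G2 t

lemma sphSys_of_measure {n : ℕ} (μ : Measure (Fin n → ℝ)) [IsProbabilityMeasure μ] (R : ℝ)
    (hs : μ ({x : Fin n → ℝ | ∑ i, (x i)^2 = R^2})ᶜ = 0)
    (hinv : ∀ A : Matrix (Fin n) (Fin n) ℝ, A * A.transpose = 1 → μ.map (A.mulVec) = μ)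
    (y : Fin n → ℝ) (hy : (∑ i, (y i)^2) * R^2 = 1) :
    SphSys ((n : ℝ) - 1) (fun t => ∫ x, exp (t * ∑ k, y k * x k) ∂μ)
      (fun t => ∫ x, (∑ k, y k * x k) * exp (t * ∑ k, y k * x k) ∂μ)
      (fun t => ∫ x, (∑ k, y k * x k)^2 * exp (t * ∑ k, y k * x k) ∂μ) := by
  have hae : ∀ᵐ x ∂μ, ∑ i, (x i)^2 = R^2 := by
    rw [ae_iff]; exact hs
  set X : (Fin n → ℝ) → ℝ := fun x => ∑ k, y k * x k with hX
  have hXc : Continuous X := by simp only [hX]; fun_prop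
  have hb : ∀ᵐ x ∂μ, X x ∈ Set.Icc (-1 : ℝ) 1 := by
    filter_upwards [hae] with x hx
    have := Finset.sum_mul_sq_le_sq_mul_sq Finset.univ y x
    rw [hx, hy] at this
    exact abs_le.mp ((sq_le_one_iff_abs_le_one _).mp this)
  have hset : integrableExpSet X μ = Set.univ := by
    ext t
    simp only [integrableExpSet, Set.mem_setOf_eq, Set.mem_univ, iff_true]
    exact integrable_exp_mul_of_mem_Icc hXc.aemeasurable hb
  have hmem : ∀ t, t ∈ interior (integrableExpSet X μ) := by simp [hset]
  have hint : ∀ (t : ℝ) (m : ℕ), Integrable (fun x => X x ^ m * exp (t * X x)) μ := fun t m =>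
    integrable_pow_mul_exp_of_mem_interior_integrableExpSet (hmem t) m
  have hi0 : ∀ (t : ℝ), Integrable (fun x => exp (t * X x)) μ := fun t => by simpa using hint t 0
  have hi1 : ∀ (t : ℝ), Integrable (fun x => X x * exp (t * X x)) μ := fun t => by
    simpa using hint t 1
  have hpos : ∀ t, 0 < ∫ x, exp (t * X x) ∂μ := fun t => integral_exp_pos (hi0 t)
  refine ⟨fun t => ?_, fun t => ?_, fun t => ?_, ?_, hpos, fun t => ?_, fun t => ?_⟩
  · simpa using hasDerivAt_integral_pow_mul_exp_real (hmem t) 0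
  · simpa using hasDerivAt_integral_pow_mul_exp_real (hmem t) 1
  · have h := sphere_identity μ R hs hinv y hy t
    have e : ∀ x, (((n : ℝ) - 1) * (∑ k, y k * x k) + t * (∑ k, y k * x k)^2 - t)
      * exp (t * ∑ k, y k * x k) = ((n : ℝ) - 1) * (X x * exp (t * X x)) +
        t * (X x ^ 2 * exp (t * X x)) + (-t) * exp (t * X x) := fun x => by simp only [hX]; ring
    simp only [e] at h
    rw [integral_comb (hi1 t) (hint t 2) (hi0 t)] at h
    change ((n : ℝ) - 1) * (∫ x, X x * exp (t * X x) ∂μ) + t * (∫ x, X x ^ 2 * exp (t * X x) ∂μ)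
      = t * ∫ x, exp (t * X x) ∂μ
    linarith
  · simp
  · refine integral_mono_ae (hi1 t) (hi0 t) ?_
    filter_upwards [hb] with x hx
    have := exp_pos (t * X x)
    have h2 := hx.2
    change X x * exp (t * X x) ≤ exp (t * X x)
    nlinarith
  · have h0 := hpos t
    set g0 := ∫ x, exp (t * X x) ∂μ with hg0
    set g1 := ∫ x, X x * exp (t * X x) ∂μ with hg1
    have h : 0 ≤ ∫ x, (g0 * X x - g1)^2 * exp (t * X x) ∂μ :=
      integral_nonneg fun x => by positivity
    have e : ∀ x, (g0 * X x - g1)^2 * exp (t * X x) = g0^2 * (X x ^ 2 * exp (t * X x)) +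
        (-(2 * g0 * g1)) * (X x * exp (t * X x)) + g1^2 * exp (t * X x) := fun x => by ring
    simp only [e] at h
    rw [integral_comb (hint t 2) (hi1 t) (hi0 t), ← hg0, ← hg1] at h
    change g1 ^ 2 ≤ g0 * ∫ x, X x ^ 2 * exp (t * X x) ∂μ
    have : 0 ≤ g0 * (g0 * (∫ x, X x ^ 2 * exp (t * X x) ∂μ) - g1^2) := by nlinarith
    have := nonneg_of_mul_nonneg_right this h0
    linarith

/-- Uniqueness of the regular solution. -/
lemma SphSys.unique {p : ℕ} (hp : 0 < p) {G0 G1 G2 H0 H1 H2 : ℝ → ℝ} (hG : SphSys p G0 G1 G2)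
    (hH : SphSys p H0 H1 H2) (t : ℝ) (ht : 0 < t) : G0 t = H0 t := by
  have hW : ∀ s, HasDerivAt (fun s => s ^ p * (G1 s * H0 s - G0 s * H1 s)) 0 s := by
    intro s
    have h1 := ((hG.d1 s).mul (hH.d0 s)).sub ((hG.d0 s).mul (hH.d1 s))
    have h2 := (hasDerivAt_pow p s).mul h1
    refine h2.congr_deriv ?_
    obtain ⟨q, rfl⟩ : ∃ q, p = q + 1 := ⟨p - 1, by omega⟩
    have e1 := hG.ode s
    have e2 := hH.ode s
    simp only [Pi.mul_apply, Pi.sub_apply, Nat.add_sub_cancel, pow_succ]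
    linear_combination (s ^ q * H0 s) * e1 - s ^ q * G0 s * e2
  have hWc : ∀ s, s ^ p * (G1 s * H0 s - G0 s * H1 s) = 0 := by
    intro s
    have := is_const_of_deriv_eq_zero (f := fun s => s ^ p * (G1 s * H0 s - G0 s * H1 s))
      (fun s => (hW s).differentiableAt) (fun s => (hW s).deriv) s 0
    simpa [hp.ne'] using this
  have hq : ∀ s, HasDerivAt (fun s => G0 s / H0 s) ((G1 s * H0 s - G0 s * H1 s) / H0 s ^ 2) s :=
    fun s => (hG.d0 s).div (hH.d0 s) (hH.pos s).ne'
  obtain ⟨c, hc, hc'⟩ := exists_hasDerivAt_eq_slope (fun s => G0 s / H0 s)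
    (fun s => (G1 s * H0 s - G0 s * H1 s) / H0 s ^ 2) ht
    (fun s _ => (hq s).continuousAt.continuousWithinAt) (fun s _ => hq s)
  have hz : G1 c * H0 c - G0 c * H1 c = 0 := by
    have := hWc c
    exact (mul_eq_zero.mp this).resolve_left (pow_pos hc.1 p).ne'
  simp only [hz, zero_div, hG.zero, hH.zero] at hc'
  have h3 : G0 t / H0 t = 1 := by
    have h4 := hc'.symm
    rw [div_eq_zero_iff] at h4
    rcases h4 with h | h
    · linarith
    · linarith
  exact (div_eq_one_iff_eq (hH.pos t).ne').mp h3

/-- Estimate for the logarithmic derivative. -/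
lemma SphSys.ratio_bound {p : ℝ} (hp : 0 < p) {G0 G1 G2 : ℝ → ℝ} (hG : SphSys p G0 G1 G2)
    {s0 τ0 : ℝ} (hs0 : 0 ≤ s0) (hs1 : s0 ≤ 1) (h0 : s0 = τ0 * (1 - s0 ^ 2))
    {t h : ℝ} (hh : 0 < h) (hht : h < t) :
    |G1 t / G0 t - s0| ≤ |t / p - τ0| + h / p + (t / p) / h := by
  have ht : 0 < t := hh.trans hht
  set r : ℝ → ℝ := fun t => G1 t / G0 t with hr
  set r' : ℝ → ℝ := fun t => (G2 t * G0 t - G1 t * G1 t) / G0 t ^ 2 with hr'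
  have hder : ∀ t, HasDerivAt r (r' t) t := fun t => (hG.d1 t).div (hG.d0 t) (hG.pos t).ne'
  have hr'0 : ∀ t, 0 ≤ r' t := fun t => by
    have := hG.cs t
    exact div_nonneg (by nlinarith) (sq_nonneg _)
  have hmono : Monotone r := monotone_of_hasDerivAt_nonneg hder hr'0
  have hr0 : r 0 = 0 := by
    have h1 := hG.ode 0
    have : G1 0 = 0 := by
      simp at h1; exact h1.resolve_left hp.ne'
    simp [hr, this]
  have hrnn : ∀ t, 0 ≤ t → 0 ≤ r t := fun t ht => hr0 ▸ hmono ht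
  have hr1 : ∀ t, r t ≤ 1 := fun t => (div_le_one (hG.pos t)).mpr (hG.le t)
  have hode : ∀ t, r t + (t / p) * (r t ^ 2 + r' t) = t / p := by
    intro t
    have := hG.ode t
    have hne := (hG.pos t).ne'
    simp only [hr, hr']
    field_simp
    linear_combination (G0 t) * this
  -- basic two-sided estimate
  have hup : ∀ t, 0 < t → r t - s0 ≤ |t / p - τ0| := by
    intro t ht
    by_contra hcon
    push Not at hcon
    have hτ : 0 < t / p := div_pos ht hp
    have e := hode t
    have ha := le_abs_self (t / p - τ0)
    have ha0 := abs_nonneg (t / p - τ0)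
    have h1 := hrnn t ht.le
    have h2 := mul_nonneg hτ.le (hr'0 t)
    have h3 : 0 ≤ (t / p) * ((r t - s0) * (r t + s0)) := by
      apply mul_nonneg hτ.le (mul_nonneg (by linarith) (by linarith))
    have e2 : (r t - s0) + (t / p) * ((r t - s0) * (r t + s0)) + t / p * r' t =
      (t / p - τ0) * (1 - s0 ^ 2) := by linear_combination e - h0
    have h4 : (t / p - τ0) * (1 - s0 ^ 2) ≤ |t / p - τ0| := by
      have : 0 ≤ 1 - s0 ^ 2 := by nlinarith
      have h5 : 1 - s0 ^ 2 ≤ 1 := by nlinarith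
      nlinarith
    linarith
  have hlo : ∀ t, 0 < t → s0 - r t ≤ |t / p - τ0| + t / p * r' t := by
    intro t ht
    by_contra hcon
    push Not at hcon
    have hτ : 0 < t / p := div_pos ht hp
    have e := hode t
    have ha := neg_abs_le (t / p - τ0)
    have ha0 := abs_nonneg (t / p - τ0)
    have h1 := hrnn t ht.le
    have h2 := mul_nonneg hτ.le (hr'0 t)
    have h3 : 0 ≤ (t / p) * ((s0 - r t) * (r t + s0)) := by
      apply mul_nonneg hτ.le (mul_nonneg (by linarith) (by linarith))
    have e2 : (s0 - r t) + (t / p) * ((s0 - r t) * (r t + s0)) =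
      t / p * r' t - (t / p - τ0) * (1 - s0 ^ 2) := by linear_combination h0 - e
    have h4 : -|t / p - τ0| ≤ (t / p - τ0) * (1 - s0 ^ 2) := by
      have : 0 ≤ 1 - s0 ^ 2 := by nlinarith
      have h5 : 1 - s0 ^ 2 ≤ 1 := by nlinarith
      nlinarith
    linarith
  obtain ⟨c, hc, hc'⟩ := exists_hasDerivAt_eq_slope r r' (show t - h < t by linarith)
    (fun s _ => (hder s).continuousAt.continuousWithinAt) (fun s _ => hder s)
  have hc0 : 0 < c := by linarith [hc.1]
  have hrc : r' c ≤ 1 / h := by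
    rw [hc', show t - (t - h) = h by ring]
    apply div_le_div_of_nonneg_right _ hh.le
    linarith [hr1 t, hrnn (t - h) (by linarith)]
  have hA : 0 ≤ h / p := by positivity
  have hB : 0 ≤ (t / p) / h := by positivity
  rw [abs_le]
  constructor
  · have h1 := hlo c hc0
    have h2 : r c ≤ r t := hmono hc.2.le
    have h3 : |c / p - τ0| ≤ |t / p - τ0| + h / p := by
      have : c / p - τ0 = (t / p - τ0) + (c - t) / p := by ring
      rw [this]
      refine (abs_add_le _ _).trans ?_
      rw [abs_div, abs_of_pos hp]
      have : |c - t| ≤ h := abs_le.mpr ⟨by linarith [hc.1], by linarith [hc.2]⟩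
      gcongr
    have h4 : c / p * r' c ≤ (t / p) / h := by
      rw [div_eq_mul_one_div (t / p) h]
      have := hc.2.le
      have := hr'0 c
      gcongr
    change _ ≤ r t - s0
    linarith
  · have := hup t ht
    change r t - s0 ≤ _
    linarith

set_option maxHeartbeats 1000000 in
lemma SphSys.log_bound {n : ℕ} (hn : 3 ≤ n) {G0 G1 G2 : ℝ → ℝ}
    (hG : SphSys ((n : ℝ) - 1) G0 G1 G2)
    {a b N a' b' : ℝ} (ha : 0 < a) (hb : 0 < b) (hN : 0 < N) (hNab : N = b ^ 2 - a ^ 2)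
    (ha1 : a / 2 ≤ a') (ha2 : a' ≤ 2 * a) (hb1 : b / 2 ≤ b') (hb2 : b' ≤ 2 * b) :
    |n * (a ^ 2 - a' ^ 2) / (2 * N) + (log (G0 (n * (a' * b' / N))) - log (G0 (n * (a * b' / N))))|
      ≤ (1 / (2 * N) + 4 * b ^ 2 / N ^ 2) * (n * |a' - a| ^ 2)
        + (a / (b * N) + 2 * a * b / N ^ 2) * (n * (|a' - a| * |b' - b|))
        + (2 * b * (9 * (a * b / N) + 64) / N) * (|a' - a| * √n) := by
  have hn3 : (3 : ℝ) ≤ n := by exact_mod_cast hn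
  have hn0 : (0 : ℝ) < n := by linarith
  have hp : (0 : ℝ) < (n : ℝ) - 1 := by linarith
  set p : ℝ := (n : ℝ) - 1 with hpdef
  set A := |a' - a| with hA
  set B := |b' - b| with hB
  have hA0 : 0 ≤ A := abs_nonneg _
  have hB0 : 0 ≤ B := abs_nonneg _
  set τ0 := a * b / N with hτ0
  have hτpos : 0 < τ0 := by positivity
  set s0 := a / b with hs0
  have hab : a ≤ b := by nlinarith
  have hs0nn : 0 ≤ s0 := by positivity
  have hs01 : s0 ≤ 1 := (div_le_one hb).mpr hab
  have hrel : s0 = τ0 * (1 - s0 ^ 2) := by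
    rw [hs0, hτ0]; field_simp; rw [hNab]
  set w := √(n : ℝ) with hw
  have hw2 : w * w = n := Real.mul_self_sqrt hn0.le
  have hw1 : 1 ≤ w := by rw [hw]; exact Real.one_le_sqrt.mpr (by linarith)
  have hw0 : 0 < w := by linarith
  set D0 := (2 * b * A + a * B) / N with hD0
  set K := 9 * τ0 + 64 with hK
  -- derivative bound
  have hrb : ∀ ξ : ℝ, n * (τ0 / 4) ≤ ξ → ξ ≤ n * (4 * τ0) → |ξ / n - τ0| ≤ D0 →
      |G1 ξ / G0 ξ - s0| ≤ D0 + K / w := by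
    intro ξ h1 h2 h3
    have hξ : 0 < ξ := lt_of_lt_of_le (by positivity) h1
    have hh : 0 < τ0 / 8 * w := by positivity
    have hlt : τ0 / 8 * w < ξ := by
      refine lt_of_lt_of_le ?_ h1
      rw [← hw2]; nlinarith [mul_pos hτpos hw0, mul_le_mul_of_nonneg_left hw1 (mul_pos hτpos hw0).le]
    have h := hG.ratio_bound hp hs0nn hs01 hrel hh hlt
    have hpn : (n : ℝ) / 2 ≤ p := by rw [hpdef]; linarith
    have hwp : w * w / 2 ≤ p := by rw [hw2]; exact hpn
    have e1 : |ξ / p - τ0| ≤ D0 + 8 * τ0 / w := by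
      have : ξ / p - τ0 = (ξ / n - τ0) + ξ / n / p := by
        rw [hpdef] at hp ⊢; field_simp; ring
      rw [this]
      refine (abs_add_le _ _).trans (add_le_add h3 ?_)
      rw [abs_of_pos (by positivity)]
      have h5 : ξ / n ≤ 4 * τ0 := by rw [div_le_iff₀ hn0]; linarith
      rw [div_le_div_iff₀ hp hw0]
      have : w / 2 ≤ p := by nlinarith
      calc ξ / n * w ≤ 4 * τ0 * w := by gcongr
        _ = 8 * τ0 * (w / 2) := by ring
        _ ≤ 8 * τ0 * p := by gcongr
    have e2 : τ0 / 8 * w / p ≤ τ0 / w := by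
      rw [div_le_div_iff₀ hp hw0]
      have := mul_le_mul_of_nonneg_left hwp hτpos.le
      have : 0 ≤ τ0 * (w * w) := by positivity
      linarith
    have e3 : ξ / p / (τ0 / 8 * w) ≤ 64 / w := by
      rw [div_div, div_le_div_iff₀ (by positivity) hw0]
      have h6 : ξ ≤ 8 * τ0 * p := by
        have := mul_le_mul_of_nonneg_right hpn (by positivity : 0 ≤ 8 * τ0)
        linarith
      calc ξ * w ≤ 8 * τ0 * p * w := by gcongr
        _ = 64 * (p * (τ0 / 8 * w)) := by ring
    calc _ ≤ _ := h
      _ ≤ (D0 + 8 * τ0 / w) + τ0 / w + 64 / w := by gcongr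
      _ = D0 + K / w := by rw [hK]; ring
  set S : Set ℝ := Set.Icc (n * (τ0 / 4)) (n * (4 * τ0)) ∩ Set.Icc (n * (τ0 - D0)) (n * (τ0 + D0))
    with hS
  have hSc : Convex ℝ S := (convex_Icc _ _).inter (convex_Icc _ _)
  have hφ : ∀ ξ ∈ S, HasDerivWithinAt (fun ξ => log (G0 ξ) - s0 * ξ) (G1 ξ / G0 ξ - s0) S ξ := by
    intro ξ _
    have := ((hG.d0 ξ).log (hG.pos ξ).ne').sub ((hasDerivAt_id ξ).const_mul s0)
    rw [mul_one] at this
    exact this.hasDerivWithinAt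
  have hbd : ∀ ξ ∈ S, ‖G1 ξ / G0 ξ - s0‖ ≤ D0 + K / w := by
    intro ξ hξ
    refine hrb ξ hξ.1.1 hξ.1.2 ?_
    rw [abs_le]
    constructor
    · have := hξ.2.1
      have : τ0 - D0 ≤ ξ / n := by rw [le_div_iff₀ hn0]; linarith
      linarith
    · have := hξ.2.2
      have : ξ / n ≤ τ0 + D0 := by rw [div_le_iff₀ hn0]; linarith
      linarith
  have hmemgen : ∀ c : ℝ, a / 2 ≤ c → c ≤ 2 * a → |c - a| ≤ A → n * (c * b' / N) ∈ S := by
    intro c hc1 hc2 hc3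
    have hb'0 : 0 < b' := by linarith
    have hc0 : 0 < c := by linarith
    refine ⟨⟨?_, ?_⟩, ?_⟩
    · refine mul_le_mul_of_nonneg_left ?_ hn0.le
      rw [hτ0, div_div, div_le_div_iff₀ (by positivity) hN]
      have : a / 2 * (b / 2) ≤ c * b' := by gcongr
      nlinarith
    · refine mul_le_mul_of_nonneg_left ?_ hn0.le
      rw [hτ0, ← mul_div_assoc]
      refine div_le_div_of_nonneg_right ?_ hN.le
      have : c * b' ≤ 2 * a * (2 * b) := by gcongr
      linarith
    · have h1 : |c * b' / N - τ0| ≤ D0 := by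
        have : c * b' / N - τ0 = ((c - a) * b' + a * (b' - b)) / N := by rw [hτ0]; ring
        rw [this, abs_div, abs_of_pos hN, hD0]
        refine div_le_div_of_nonneg_right ?_ hN.le
        refine (abs_add_le _ _).trans ?_
        rw [abs_mul, abs_mul, abs_of_pos hb'0, abs_of_pos ha, ← hB]
        have : |c - a| * b' ≤ A * (2 * b) := by gcongr
        linarith
      rw [abs_le] at h1
      exact ⟨mul_le_mul_of_nonneg_left (by linarith [h1.1]) hn0.le,
        mul_le_mul_of_nonneg_left (by linarith [h1.2]) hn0.le⟩
  have hm1 : n * (a * b' / N) ∈ S := hmemgen a (by linarith) (by linarith) (by simpa using hA0)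
  have hm2 : n * (a' * b' / N) ∈ S := hmemgen a' ha1 ha2 le_rfl
  have hmvt := hSc.norm_image_sub_le_of_norm_hasDerivWithin_le hφ hbd hm1 hm2
  rw [Real.norm_eq_abs, Real.norm_eq_abs] at hmvt
  have hb'0 : 0 < b' := by linarith
  have hdt : |n * (a' * b' / N) - n * (a * b' / N)| ≤ n * (A * (2 * b) / N) := by
    have : (n : ℝ) * (a' * b' / N) - n * (a * b' / N) = n * ((a' - a) * b' / N) := by ring
    rw [this, abs_mul, abs_div, abs_mul, abs_of_pos hN, abs_of_pos hn0, abs_of_pos hb'0]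
    gcongr
  have hD0nn : 0 ≤ D0 := by positivity
  have hKnn : 0 ≤ K / w := by positivity
  have hmain : |(n : ℝ) / N * ((a' - a) * ((a - a') / 2 + a * (b' - b) / b))| ≤
      n / N * (A * (A / 2 + a * B / b)) := by
    rw [abs_mul, abs_mul, abs_of_pos (div_pos hn0 hN)]
    gcongr
    refine (abs_add_le _ _).trans (add_le_add (le_of_eq ?_) (le_of_eq ?_))
    · rw [abs_div, abs_sub_comm, abs_of_pos (two_pos : (0 : ℝ) < 2)]
    · rw [abs_div, abs_mul, abs_of_pos ha, abs_of_pos hb]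
  have hsplit : n * (a ^ 2 - a' ^ 2) / (2 * N) +
      (log (G0 (n * (a' * b' / N))) - log (G0 (n * (a * b' / N)))) =
      (n : ℝ) / N * ((a' - a) * ((a - a') / 2 + a * (b' - b) / b)) +
      ((log (G0 (n * (a' * b' / N))) - s0 * (n * (a' * b' / N))) -
        (log (G0 (n * (a * b' / N))) - s0 * (n * (a * b' / N)))) := by
    rw [hs0]; field_simp; ring
  rw [hsplit]
  have hnw : (n : ℝ) / w = w := by rw [← hw2]; field_simp
  calc _ ≤ _ := abs_add_le _ _
    _ ≤ n / N * (A * (A / 2 + a * B / b)) + (D0 + K / w) * (n * (A * (2 * b) / N)) :=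
      add_le_add hmain (hmvt.trans (mul_le_mul_of_nonneg_left hdt (by positivity)))
    _ = n / N * (A * (A / 2 + a * B / b)) + D0 * (n * (A * (2 * b) / N))
        + K * (A * (2 * b) / N) * (n / w) := by ring
    _ = _ := by
      rw [hnw, hD0]; field_simp; ring

lemma Qcc_eq (σ : ∀ n : ℕ, ℝ → Measure (Fin n → ℝ)) (hσ : UniformSphereFamily σ)
    {N Γ' : ℝ} (hN : 0 < N) (hΓ : 0 < Γ') {n : ℕ} (hn : 1 ≤ n) (y : Fin n → ℝ) {q : ℝ}
    (hq : 0 < q) (hy : ∑ i, (y i)^2 = n * q) :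
    ∃ G0 G1 G2, SphSys ((n : ℝ) - 1) G0 G1 G2 ∧
      Qcc σ N Γ' n y = (2 * π * N) ^ (-(n : ℝ)/2) * (exp (-(n * q + n * Γ') / (2 * N)) *
        G0 (n * (√Γ' * √q / N))) := by
  have hn0 : (0 : ℝ) < n := by exact_mod_cast hn
  set R := √(n * Γ') with hR
  have hR0 : 0 < R := Real.sqrt_pos.mpr (by positivity)
  have hR2 : R ^ 2 = n * Γ' := Real.sq_sqrt (by positivity)
  obtain ⟨hprob, hs, hinv⟩ := hσ n hn R hR0
  set ρ := n * (√Γ' * √q) with hρ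
  have hρ0 : 0 < ρ := by positivity
  have hρ2 : ρ ^ 2 = n * q * R ^ 2 := by
    rw [hρ, hR2, mul_pow, mul_pow, Real.sq_sqrt hΓ.le, Real.sq_sqrt hq.le]; ring
  have hz : (∑ i, (y i / ρ) ^ 2) * R ^ 2 = 1 := by
    simp only [div_pow]
    rw [← Finset.sum_div, hy, hρ2]
    field_simp
  refine ⟨_, _, _, sphSys_of_measure (σ n R) R hs hinv (fun i => y i / ρ) hz, ?_⟩
  have hae : ∀ᵐ x ∂(σ n R), ∑ i, (x i)^2 = R^2 := by
    rw [ae_iff]; exact hs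
  unfold Qcc
  rw [integral_const_mul, ← integral_const_mul (exp _)]
  congr 1
  refine integral_congr_ae ?_
  filter_upwards [hae] with x hx
  rw [← exp_add]
  congr 1
  have e1 : ∑ i, (y i - x i) ^ 2 = n * q + n * Γ' - 2 * ∑ i, y i * x i := by
    rw [← hy, ← hR2, ← hx, Finset.mul_sum, ← Finset.sum_add_distrib, ← Finset.sum_sub_distrib]
    exact Finset.sum_congr rfl fun i _ => by ring
  have e2 : ∑ i, y i / ρ * x i = (∑ i, y i * x i) / ρ := by
    rw [Finset.sum_div]; exact Finset.sum_congr rfl fun i _ => by ring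
  rw [e1, e2, show (n : ℝ) * (√Γ' * √q / N) = ρ / N by rw [hρ]; ring]
  field_simp
  ring

lemma sqrt_sub_bound {u v : ℝ} (hu : 0 < u) (hv : 0 ≤ v) : |√v - √u| ≤ |v - u| / √u := by
  have hu' : 0 < √u := Real.sqrt_pos.mpr hu
  have hv' : 0 ≤ √v := Real.sqrt_nonneg v
  rw [le_div_iff₀ hu']
  have : v - u = (√v - √u) * (√v + √u) := by
    nlinarith [Real.sq_sqrt hu.le, Real.sq_sqrt hv]
  rw [this, abs_mul, abs_of_pos (by linarith : 0 < √v + √u)]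
  have := abs_nonneg (√v - √u)
  gcongr
  linarith

lemma sqrt_range {u v : ℝ} (hu : 0 < u) (h1 : u / 2 ≤ v) (h2 : v ≤ 3 * u / 2) :
    √u / 2 ≤ √v ∧ √v ≤ 2 * √u := by
  have hu2 := Real.sq_sqrt hu.le
  have hu' : 0 < √u := Real.sqrt_pos.mpr hu
  constructor
  · apply Real.le_sqrt_of_sq_le; nlinarith
  · rw [Real.sqrt_le_left (by positivity)]; nlinarith

set_option maxHeartbeats 1000000 in
/-- uniform `O(log n + nε² + nΔ² + n|ε|Δ)` bound on
`|log(Q^cc_{Γ+ε,n}(y)/Q^cc_{Γ,n}(y))|` over the typical set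
`{y : Γ+N−Δ ≤ ‖y‖²/n ≤ Γ+N+Δ}`. -/
theorem log_ratio_Qcc_Qcc_bound (N Γ : ℝ) (hN : 0 < N) (hΓ : 0 < Γ)
    (σ : ∀ n : ℕ, ℝ → Measure (Fin n → ℝ)) (hσ : UniformSphereFamily σ) :
    ∃ (C : ℝ) (n₀ : ℕ) (ε₀ Δ₀ : ℝ), 0 < C ∧ 0 < n₀ ∧ 0 < ε₀ ∧ ε₀ < Γ ∧ 0 < Δ₀ ∧
      ∀ n : ℕ, n₀ ≤ n → ∀ ε : ℝ, |ε| ≤ ε₀ → ∀ Δ : ℝ, 0 ≤ Δ → Δ ≤ Δ₀ →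
        ∀ y : Fin n → ℝ,
          Γ + N - Δ ≤ (∑ i, (y i)^2) / n → (∑ i, (y i)^2) / n ≤ Γ + N + Δ →
          |Real.log (Qcc σ N (Γ + ε) n y / Qcc σ N Γ n y)|
            ≤ C * (Real.log n + n * ε^2 + n * Δ^2 + n * |ε| * Δ) := by

  set a := √Γ with hadef
  set b := √(Γ + N) with hbdef
  have ha : 0 < a := Real.sqrt_pos.mpr hΓ
  have hb : 0 < b := Real.sqrt_pos.mpr (by linarith)
  have ha2 : a ^ 2 = Γ := Real.sq_sqrt hΓ.le
  have hb2 : b ^ 2 = Γ + N := Real.sq_sqrt (by linarith)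
  have hNab : N = b ^ 2 - a ^ 2 := by linarith
  set c1 := 1 / (2 * N) + 4 * b ^ 2 / N ^ 2 with hc1
  set c2 := a / (b * N) + 2 * a * b / N ^ 2 with hc2
  set c3 := 2 * b * (9 * (a * b / N) + 64) / N with hc3
  have hc1p : 0 < c1 := by positivity
  have hc2p : 0 < c2 := by positivity
  have hc3p : 0 < c3 := by positivity
  set C := (c1 + c3) / a ^ 2 + c2 / (a * b) + c3 with hC
  refine ⟨C, 3, Γ / 2, (Γ + N) / 2, by positivity, by norm_num, by positivity, by linarith,
    by positivity, ?_⟩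
  intro n hn ε hε Δ hΔ0 hΔ y hy1 hy2
  have hn3 : (3 : ℝ) ≤ n := by exact_mod_cast hn
  have hn0 : (0 : ℝ) < n := by linarith
  set q := (∑ i, (y i)^2) / n with hq
  have hyq : ∑ i, (y i)^2 = n * q := by rw [hq]; field_simp
  rw [abs_le] at hε
  have hΓ' : 0 < Γ + ε := by linarith
  have hq0 : 0 < q := by linarith
  obtain ⟨G0, G1, G2, hG, hQ⟩ := Qcc_eq σ hσ hN hΓ (by omega) y hq0 hyq
  obtain ⟨H0, H1, H2, hH, hQ'⟩ := Qcc_eq σ hσ hN hΓ' (by omega) y hq0 hyq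
  set a' := √(Γ + ε) with ha'def
  set b' := √q with hb'def
  have ha'p : 0 < a' := Real.sqrt_pos.mpr hΓ'
  have hb'p : 0 < b' := Real.sqrt_pos.mpr hq0
  have ha'2 : a' ^ 2 = Γ + ε := Real.sq_sqrt hΓ'.le
  have hHG : H0 (n * (a' * b' / N)) = G0 (n * (a' * b' / N)) := by
    have hcast : ((n - 1 : ℕ) : ℝ) = (n : ℝ) - 1 := by
      rw [Nat.cast_sub (by omega)]; simp
    rw [← hcast] at hG hH
    exact SphSys.unique (by omega) hH hG _ (by positivity)
  have hG1 := hG.pos (n * (a * b' / N))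
  have hG2 := hG.pos (n * (a' * b' / N))
  have hK : (0 : ℝ) < (2 * π * N) ^ (-(n : ℝ)/2) := Real.rpow_pos_of_pos (by positivity) _
  have hlog : Real.log (Qcc σ N (Γ + ε) n y / Qcc σ N Γ n y) =
      n * (a ^ 2 - a' ^ 2) / (2 * N) +
        (log (G0 (n * (a' * b' / N))) - log (G0 (n * (a * b' / N)))) := by
    rw [hQ, hQ', hHG, mul_div_mul_left _ _ hK.ne', Real.log_div (by positivity) (by positivity),
      Real.log_mul (exp_pos _).ne' hG2.ne', Real.log_mul (exp_pos _).ne' hG1.ne', Real.log_exp,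
      Real.log_exp, ha2, ha'2]
    ring
  obtain ⟨r1, r2⟩ := sqrt_range (v := Γ + ε) hΓ (by linarith) (by linarith)
  obtain ⟨r3, r4⟩ := sqrt_range (u := Γ + N) (v := q) (by linarith) (by linarith) (by linarith)
  have hbound := hG.log_bound hn ha hb hN hNab r1 r2 r3 r4
  rw [hlog]
  refine hbound.trans ?_
  rw [← hc1, ← hc2, ← hc3]
  have hA : |a' - a| ≤ |ε| / a := by
    have := sqrt_sub_bound (v := Γ + ε) hΓ hΓ'.le
    simpa using this
  have hB : |b' - b| ≤ Δ / b := by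
    refine (sqrt_sub_bound (u := Γ + N) (v := q) (by linarith) hq0.le).trans ?_
    refine div_le_div_of_nonneg_right ?_ hb.le
    rw [abs_le]; constructor <;> linarith
  have hA0 : 0 ≤ |a' - a| := abs_nonneg _
  have hB0 : 0 ≤ |b' - b| := abs_nonneg _
  clear hbound hlog
  generalize |a' - a| = A at hA hA0 ⊢
  generalize |b' - b| = B at hB hB0 ⊢
  have hAA : n * A ^ 2 ≤ (n * ε ^ 2) / a ^ 2 := by
    have : A ^ 2 ≤ (|ε| / a) ^ 2 := by gcongr
    rw [div_pow, sq_abs ε] at this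
    rw [mul_div_assoc]; gcongr
  have hAB : n * (A * B) ≤ (n * |ε| * Δ) / (a * b) := by
    have : A * B ≤ (|ε| / a) * (Δ / b) := by gcongr
    calc (n : ℝ) * (A * B) ≤ n * ((|ε| / a) * (Δ / b)) := by gcongr
      _ = _ := by field_simp
  have hAw : A * √n ≤ 1 + n * A ^ 2 := by
    have h2 := Real.sq_sqrt hn0.le
    have h3 := sq_nonneg (A * √n - 1)
    have h4 := mul_nonneg hA0 (Real.sqrt_nonneg (n : ℝ))
    have h5 : (A * √n) ^ 2 = n * A ^ 2 := by rw [mul_pow, h2]; ring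
    have h6 : (A * √n - 1) ^ 2 = (A * √n) ^ 2 - 2 * (A * √n) + 1 := by ring
    linarith
  have hlogn : 1 ≤ Real.log n := by
    rw [Real.le_log_iff_exp_le hn0]
    linarith [Real.exp_one_lt_d9]
  generalize Real.log n = L at hlogn ⊢
  have t1 : 0 ≤ n * ε ^ 2 := by positivity
  have t2 : 0 ≤ n * Δ ^ 2 := by positivity
  have t3 : 0 ≤ n * |ε| * Δ := by positivity
  have k1 : (c1 + c3) / a ^ 2 ≤ C := by
    have : 0 ≤ c2 / (a * b) := by positivity
    linarith
  have k2 : c2 / (a * b) ≤ C := by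
    have : 0 ≤ (c1 + c3) / a ^ 2 := by positivity
    linarith
  have k3 : c3 ≤ C := by
    have : 0 ≤ (c1 + c3) / a ^ 2 := by positivity
    have : 0 ≤ c2 / (a * b) := by positivity
    linarith
  have hCp : 0 ≤ C := by linarith
  calc c1 * (n * A ^ 2) + c2 * (n * (A * B)) + c3 * (A * √n)
      ≤ c1 * (n * A ^ 2) + c2 * (n * (A * B)) + c3 * (1 + n * A ^ 2) := by gcongr
    _ = (c1 + c3) * (n * A ^ 2) + c2 * (n * (A * B)) + c3 * 1 := by ring
    _ ≤ (c1 + c3) * ((n * ε ^ 2) / a ^ 2) + c2 * ((n * |ε| * Δ) / (a * b)) + c3 * L := by gcongr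
    _ = (c1 + c3) / a ^ 2 * (n * ε ^ 2) + c2 / (a * b) * (n * |ε| * Δ) + c3 * L := by ring
    _ ≤ C * (n * ε ^ 2) + C * (n * |ε| * Δ) + C * L := by gcongr
    _ ≤ C * (L + n * ε ^ 2 + n * Δ ^ 2 + n * |ε| * Δ) := by
      linarith [mul_nonneg hCp t2]
end

section
/- Fix N > 0 and Γ > 0, and let Q*ₙ denote the density of the Gaussian N(0, (Γ+N)·Iₙ) on ℝⁿ. There exist positive constants C, n₀ and Δ₀ such that for all integers n ≥ n₀ and all real Δ with 0 ≤ Δ ≤ Δ₀: for every y ∈ ℝⁿ with Γ + N − Δ ≤ ‖y‖²/n ≤ Γ + N + Δ, one has | log( Q^cc_{Γ,n}(y) / Q*ₙ(y) ) | ≤ C·( log n + n·Δ² ). -/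
open Real MeasureTheory ProbabilityTheory

/-- rising product -/
noncomputable def rp (a : ℝ) (k : ℕ) : ℝ := ∏ j ∈ Finset.range k, (a + j)

lemma rp_pos {a : ℝ} (ha : 0 < a) (k : ℕ) : 0 < rp a k :=
  Finset.prod_pos fun j _ => by positivity

lemma rp_succ (a : ℝ) (k : ℕ) : rp a (k+1) = rp a k * (a + k) := by
  simp [rp, Finset.prod_range_succ]

lemma log_mul_le {p q : ℝ} (hp : 0 < p) (hq : 0 < q) : p * log q - p * log p ≤ q - p := by
  have h := Real.log_le_sub_one_of_pos (div_pos hq hp)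
  rw [Real.log_div hq.ne' hp.ne'] at h
  have := mul_le_mul_of_nonneg_left h hp.le
  have e : p * (q / p - 1) = q - p := by field_simp
  linarith

lemma log_rp_ge {a : ℝ} (ha : 0 < a) (k : ℕ) :
    (a + k - 1) * log (a + k) - (a - 1) * log a - k ≤ log (rp a k) := by
  induction k with
  | zero => simp [rp]
  | succ k ih =>
    have hm : 0 < a + k := by positivity
    rw [rp_succ, Real.log_mul (rp_pos ha k).ne' hm.ne']
    have h := log_mul_le hm (show 0 < a + k + 1 by linarith)
    push_cast
    rw [← add_assoc]
    linarith

lemma log_rp_le {a : ℝ} (ha : 0 < a) (k : ℕ) :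
    log (rp a k) ≤ (a + k) * log (a + k) - a * log a - k := by
  induction k with
  | zero => simp [rp]
  | succ k ih =>
    have hm : 0 < a + k := by positivity
    rw [rp_succ, Real.log_mul (rp_pos ha k).ne' hm.ne']
    have h := log_mul_le (show 0 < a + k + 1 by linarith) hm
    push_cast
    rw [← add_assoc]
    linarith

lemma log_fact_ge (k : ℕ) : k * log k - k ≤ log (k.factorial : ℝ) := by
  induction k with
  | zero => simp
  | succ k ih =>
    rw [Nat.factorial_succ]
    push_cast
    rw [Real.log_mul (by positivity) (by positivity)]
    rcases Nat.eq_zero_or_pos k with rfl | hk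
    · simp
    have hm : (0:ℝ) < k := by exact_mod_cast hk
    have h := log_mul_le hm (show 0 < (k:ℝ) + 1 by linarith)
    linarith

lemma upper_term {a v : ℝ} (ha : 0 < a) (hv : 0 < v) (k : ℕ) :
    v ^ k / rp a k ≤ ((a + k) / a) * exp (a * log a - a * log v + v - a) := by
  have hm : 0 < a + k := by positivity
  have hP := rp_pos ha k
  rw [← Real.exp_log (show 0 < v ^ k / rp a k by positivity),
    ← Real.exp_log (show 0 < (a+k)/a by positivity), ← Real.exp_add]
  apply Real.exp_le_exp.mpr
  rw [Real.log_div (by positivity) hP.ne', Real.log_pow, Real.log_div hm.ne' ha.ne']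
  have h1 := log_rp_ge ha k
  have h2 := log_mul_le hm hv
  linarith

lemma lower_term {a x : ℝ} (ha : 0 < a) (hx : 0 < x) (hx1 : x < 1) (k : ℕ) :
    exp (a * log (1 - x)) * x ^ k * rp a k ≤ k.factorial := by
  have hm : 0 < a + k := by positivity
  have hP := rp_pos ha k
  have hk : (0:ℝ) < k.factorial := by positivity
  rw [← Real.log_le_log_iff (by positivity) hk, Real.log_mul (by positivity) hP.ne',
    Real.log_mul (by positivity) (by positivity), Real.log_exp, Real.log_pow]
  have h1 := log_rp_le ha k
  have h2 := log_fact_ge k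
  have h3 := log_mul_le ha (show 0 < (1 - x) * (a + k) from mul_pos (by linarith) hm)
  rw [Real.log_mul (by linarith) hm.ne'] at h3
  rcases Nat.eq_zero_or_pos k with rfl | hk
  · simp [rp] at *
    have := Real.log_nonpos (by linarith : 0 ≤ 1 - x) (by linarith)
    nlinarith
  have hk' : (0:ℝ) < k := by exact_mod_cast hk
  have h4 := log_mul_le hk' (show 0 < x * (a + k) by positivity)
  rw [Real.log_mul hx.ne' hm.ne'] at h4
  linarith

lemma upper_series {a v z Φ : ℝ} (ha : 1 ≤ a) (hv : 0 < v) (hz : 0 ≤ z)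
    (h : HasSum (fun k : ℕ => z ^ k / (k.factorial * rp a k)) Φ) :
    Φ ≤ (3 + z ^ 2 / a ^ 2) * exp (a * log a - a * log v + v - a + z / v) := by
  have ha0 : 0 < a := by linarith
  set M := exp (a * log a - a * log v + v - a + z / v) with hM
  have hM0 : 0 < M := Real.exp_pos _
  have key : ∀ k : ℕ, z ^ k / (k.factorial * rp a k) ≤ (a + k) / a * M := by
    intro k
    have h1 := upper_term ha0 hv k
    have h2 := Real.pow_div_factorial_le_exp (z / v) (by positivity) k
    have e : z ^ k / (k.factorial * rp a k) = ((z / v) ^ k / k.factorial) * (v ^ k / rp a k) := by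
      have := (rp_pos ha0 k).ne'
      rw [div_pow]
      field_simp
    rw [e, hM, Real.exp_add]
    have hP := rp_pos ha0 k
    calc _ ≤ exp (z / v) * ((a + k) / a * exp (a * log a - a * log v + v - a)) :=
          mul_le_mul h2 h1 (by positivity) (by positivity)
      _ = _ := by ring
  have tele : HasSum (fun k : ℕ => 1 / (((k:ℝ) + 1) * (k + 2))) 1 := by
    have : ∀ n : ℕ, ∑ k ∈ Finset.range n, 1 / (((k:ℝ) + 1) * (k + 2)) = 1 - 1 / ((n:ℝ) + 1) := by
      intro n
      induction n with
      | zero => simp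
      | succ n ih =>
        rw [Finset.sum_range_succ, ih]; push_cast; field_simp; ring
    rw [hasSum_iff_tendsto_nat_of_nonneg (fun k => by positivity)]
    simp_rw [this]
    simpa using (tendsto_one_div_add_atTop_nhds_zero_nat (𝕜 := ℝ)).const_sub 1
  have h2 : HasSum (fun k : ℕ => z ^ (k+2) / ((k+2).factorial * rp a (k+2)))
      (Φ - ∑ k ∈ Finset.range 2, z ^ k / (k.factorial * rp a k)) :=
    (hasSum_nat_add_iff' 2).mpr h
  have h3 := hasSum_le (fun k => ?_) h2 (tele.mul_left (z ^ 2 / a ^ 2 * M))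
  · have k0 := key 0
    have k1 := key 1
    rw [Finset.sum_range_succ, Finset.sum_range_one] at h3
    have : (a + (1:ℕ)) / a * M ≤ 2 * M := by
      apply mul_le_mul_of_nonneg_right _ hM0.le
      rw [div_le_iff₀ ha0]; push_cast; linarith
    have : (a + (0:ℕ)) / a * M = M := by
      simp [ha0.ne']
    nlinarith
  · have hk := key k
    have hP := rp_pos ha0 k
    have e : z ^ (k+2) / ((k+2).factorial * rp a (k+2)) =
      (z ^ 2 / ((k+1) * (k+2) * (a + k) * (a + k + 1))) * (z ^ k / (k.factorial * rp a k)) := by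
      rw [rp_succ, rp_succ, Nat.factorial_succ, Nat.factorial_succ]
      push_cast
      field_simp
      ring
    rw [e]
    calc _ ≤ (z ^ 2 / ((k+1) * (k+2) * (a + k) * (a + k + 1))) * ((a + k) / a * M) :=
          mul_le_mul_of_nonneg_left hk (by positivity)
      _ = z ^ 2 * M / ((k+1) * (k+2)) / (a * (a + k + 1)) := by field_simp
      _ ≤ z ^ 2 * M / ((k+1) * (k+2)) / (a * a) := by
          apply div_le_div_of_nonneg_left (by positivity) (by positivity)
          have : (0:ℝ) ≤ k := by positivity
          nlinarith
      _ = _ := by field_simp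

lemma exp_sq_le {r I : ℝ} (hI : HasSum (fun k : ℕ => (r ^ k / (k.factorial : ℝ)) ^ 2) I) :
    exp r ^ 2 ≤ (∑' k : ℕ, 1 / (1 + (k:ℝ) ^ 2)) * ((1 + r ^ 2) * I) := by
  have hS : Summable (fun k : ℕ => 1 / (1 + (k:ℝ) ^ 2)) := by
    apply Summable.of_nonneg_of_le (fun k => by positivity) (fun k => ?_)
      ((summable_nat_add_iff 1).mpr (Real.summable_one_div_nat_pow.mpr one_lt_two) |>.mul_left 2)
    push_cast
    rw [mul_one_div, div_le_div_iff₀ (by positivity) (by positivity)]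
    nlinarith [sq_nonneg ((k:ℝ) - 1)]
  set S := ∑' k : ℕ, 1 / (1 + (k:ℝ) ^ 2) with hSd
  have hSp : 0 < S := hS.tsum_pos (fun k => by positivity) 0 (by norm_num)
  have h2 : HasSum (fun k : ℕ => (k:ℝ)^2 * (r ^ k / (k.factorial : ℝ)) ^ 2) (r ^ 2 * I) := by
    rw [← hasSum_nat_add_iff' 1]
    simp only [Finset.range_one, Finset.sum_singleton, Nat.cast_zero]
    have : ∀ k : ℕ, ((k+1 : ℕ):ℝ)^2 * (r ^ (k+1) / ((k+1).factorial : ℝ)) ^ 2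
        = r ^ 2 * (r ^ k / (k.factorial : ℝ)) ^ 2 := by
      intro k
      rw [Nat.factorial_succ]; push_cast; field_simp; ring
    simp_rw [this]
    simpa using hI.mul_left (r ^ 2)
  have hexp : HasSum (fun k : ℕ => r ^ k / (k.factorial : ℝ)) (exp r) := by
    rw [Real.exp_eq_exp_ℝ]; exact NormedSpace.expSeries_div_hasSum_exp r
  set E := exp r with hE
  have hE0 : 0 < E := Real.exp_pos r
  have h3 := hasSum_le (fun k => ?_) (hexp.mul_left 2)
    (((hI.add h2).mul_left (S / E)).add (hS.hasSum.mul_left (E / S)))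
  · have : E / S * S = E := by field_simp
    rw [← hSd, this] at h3
    have h4 : E ≤ S / E * (I + r ^ 2 * I) := by linarith
    calc E ^ 2 = E * E := by ring
      _ ≤ E * (S / E * (I + r ^ 2 * I)) := by gcongr
      _ = _ := by field_simp
  · set b := r ^ k / (k.factorial : ℝ)
    have hp : 0 < 1 + (k:ℝ)^2 := by positivity
    have : S / E * (b ^ 2 + (k:ℝ)^2 * b ^ 2) + E / S * (1 / (1 + (k:ℝ)^2)) - 2 * b
        = (S * (1 + (k:ℝ)^2) * b - E) ^ 2 / (S * E * (1 + (k:ℝ)^2)) := by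
      field_simp; ring
    have : 0 ≤ (S * (1 + (k:ℝ)^2) * b - E) ^ 2 / (S * E * (1 + (k:ℝ)^2)) := by positivity
    linarith

lemma lower_series {a x r Φ : ℝ} (ha : 0 < a) (hx : 0 < x) (hx1 : x < 1)
    (h : HasSum (fun k : ℕ => (r ^ 2 / x) ^ k / (k.factorial * rp a k)) Φ) :
    exp (a * log (1 - x) + 2 * r) ≤ (∑' k : ℕ, 1 / (1 + (k:ℝ) ^ 2)) * ((1 + r ^ 2) * Φ) := by
  set c := exp (a * log (1 - x)) with hc
  have hc0 : 0 < c := Real.exp_pos _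
  have hb : ∀ k : ℕ, (r ^ k / (k.factorial : ℝ)) ^ 2 ≤
      c⁻¹ * ((r ^ 2 / x) ^ k / (k.factorial * rp a k)) := by
    intro k
    have hl := lower_term ha hx hx1 k
    rw [← hc] at hl
    have hP := rp_pos ha k
    have e : c⁻¹ * ((r ^ 2 / x) ^ k / (k.factorial * rp a k))
      = (r ^ 2) ^ k / (k.factorial * (c * x ^ k * rp a k)) := by
      rw [div_pow]; field_simp
    rw [e, div_pow, ← pow_mul, ← pow_mul, mul_comm k 2, sq (k.factorial : ℝ)]
    apply div_le_div_of_nonneg_left _ (by positivity)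
    · gcongr
    · rw [pow_mul]; positivity
  have hI : Summable (fun k : ℕ => (r ^ k / (k.factorial : ℝ)) ^ 2) :=
    Summable.of_nonneg_of_le (fun k => by positivity) hb (h.summable.mul_left _)
  have h1 := exp_sq_le hI.hasSum
  have h2 := hasSum_le hb hI.hasSum (h.mul_left c⁻¹)
  set S := ∑' k : ℕ, 1 / (1 + (k:ℝ) ^ 2) with hSd
  have hS0 : 0 ≤ S := tsum_nonneg fun k => by positivity
  rw [Real.exp_add, ← hc, two_mul, Real.exp_add]
  calc c * (exp r * exp r) = c * exp r ^ 2 := by ring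
    _ ≤ c * (S * ((1 + r ^ 2) * (c⁻¹ * Φ))) := by
        refine mul_le_mul_of_nonneg_left (h1.trans ?_) hc0.le
        gcongr
    _ = _ := by field_simp

open Matrix in
lemma exists_reflection {n : ℕ} (y y' : Fin n → ℝ) (h : y ⬝ᵥ y = y' ⬝ᵥ y') :
    ∃ A : Matrix (Fin n) (Fin n) ℝ, A * A.transpose = 1 ∧ ∀ x, y ⬝ᵥ (A *ᵥ x) = y' ⬝ᵥ x := by
  by_cases hy : y = y'
  · subst hy
    exact ⟨1, by simp, by simp⟩
  set w := y - y' with hw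
  have hw0 : w ≠ 0 := sub_ne_zero.mpr hy
  have hww : w ⬝ᵥ w ≠ 0 := by rwa [Ne, dotProduct_self_eq_zero]
  have hyw : w ⬝ᵥ w = 2 * (y ⬝ᵥ w) := by
    simp only [hw, sub_dotProduct, dotProduct_sub]
    rw [dotProduct_comm y' y]; linarith
  refine ⟨1 - (2 / (w ⬝ᵥ w)) • vecMulVec w w, ?_, ?_⟩
  · have ht : (1 - (2 / (w ⬝ᵥ w)) • vecMulVec w w).transpose
      = 1 - (2 / (w ⬝ᵥ w)) • vecMulVec w w := by
      rw [transpose_sub, transpose_smul, transpose_vecMulVec]; simp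
    rw [ht, sub_mul, mul_sub, mul_sub]
    simp only [one_mul, mul_one, smul_mul_smul_comm, vecMulVec_mul_vecMulVec]
    ext i j
    simp only [Matrix.sub_apply, Matrix.smul_apply, vecMulVec_apply, smul_eq_mul, Pi.smul_apply]
    field_simp
    ring
  · intro x
    rw [sub_mulVec, one_mulVec, smul_mulVec, vecMulVec_mulVec, dotProduct_sub, dotProduct_smul]
    have : y' = y - w := by simp [hw]
    rw [this, sub_dotProduct y w x]
    clear_value w
    simp only [dotProduct_smul, smul_eq_mul, op_smul_eq_smul]
    rw [hyw] at hww ⊢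
    have hne : y ⬝ᵥ w ≠ 0 := fun h0 => hww (by rw [h0, mul_zero])
    generalize y ⬝ᵥ w = p at *
    field_simp

/-- invariant measure on sphere -/
structure IsUnif {n : ℕ} (μ : Measure (Fin n → ℝ)) (R : ℝ) : Prop where
  prob : IsProbabilityMeasure μ
  supp : ∀ᵐ x ∂μ, ∑ i, (x i)^2 = R^2
  inv : ∀ A : Matrix (Fin n) (Fin n) ℝ, A * A.transpose = 1 → μ.map (A.mulVec) = μ

open Matrix in
lemma IsUnif.congr {n : ℕ} {μ : Measure (Fin n → ℝ)} {R : ℝ} (hμ : IsUnif μ R)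
    (y y' : Fin n → ℝ) (h : y ⬝ᵥ y = y' ⬝ᵥ y') (f : ℝ → ℝ) (hf : Continuous f) :
    ∫ x, f (y ⬝ᵥ x) ∂μ = ∫ x, f (y' ⬝ᵥ x) ∂μ := by
  obtain ⟨A, hA, hx⟩ := exists_reflection y y' h
  have hm : Continuous (fun x : Fin n → ℝ => A *ᵥ x) := by fun_prop
  have hd : Continuous (fun x : Fin n → ℝ => y ⬝ᵥ x) := by
    unfold dotProduct; fun_prop
  conv_lhs => rw [← hμ.inv A hA]
  have h2 := integral_map (μ := μ) (f := fun x => f (y ⬝ᵥ x)) hm.aemeasurable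
    (hf.comp hd).aestronglyMeasurable
  simp_rw [hx] at h2
  exact h2

lemma IsUnif.integrable {n : ℕ} {μ : Measure (Fin n → ℝ)} {R : ℝ} (hμ : IsUnif μ R)
    (f : (Fin n → ℝ) → ℝ) (hf : Continuous f) : Integrable f μ := by
  have := hμ.prob
  have hc : IsCompact (Metric.closedBall (0 : Fin n → ℝ) |R|) := isCompact_closedBall _ _
  obtain ⟨C, hC⟩ := hc.exists_bound_of_continuousOn hf.continuousOn
  apply Integrable.of_bound hf.aestronglyMeasurable C
  filter_upwards [hμ.supp] with x hx
  apply hC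
  rw [mem_closedBall_zero_iff, pi_norm_le_iff_of_nonneg (abs_nonneg R)]
  intro i
  rw [Real.norm_eq_abs]
  apply sq_le_sq.mp
  rw [← hx]
  exact Finset.single_le_sum (f := fun i => (x i)^2) (fun j _ => sq_nonneg _) (Finset.mem_univ i)

open Matrix in
lemma IsUnif.pow {n : ℕ} {μ : Measure (Fin n → ℝ)} {R : ℝ} (hμ : IsUnif μ R) (i : Fin n)
    (y : Fin n → ℝ) (k : ℕ) :
    ∫ x, (y ⬝ᵥ x) ^ (2*k) ∂μ = (y ⬝ᵥ y) ^ k * ∫ x, (x i) ^ (2*k) ∂μ := by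
  have h0 : 0 ≤ y ⬝ᵥ y := by
    simpa [dotProduct] using Finset.sum_nonneg fun i _ => mul_self_nonneg (y i)
  rw [hμ.congr y (Pi.single i (√(y ⬝ᵥ y))) (by simp [Real.mul_self_sqrt h0]) (fun t => t ^ (2*k))
    (by fun_prop)]
  simp only [single_dotProduct, mul_pow]
  rw [integral_const_mul, pow_mul, Real.sq_sqrt h0]

open Matrix Polynomial in
lemma IsUnif.mixed {n : ℕ} {μ : Measure (Fin n → ℝ)} {R : ℝ} (hμ : IsUnif μ R) (i j : Fin n)
    (hij : j ≠ i) (k : ℕ) :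
    (2*k+1) * ∫ x, (x i) ^ (2*k) * (x j)^2 ∂μ = ∫ x, (x i) ^ (2*(k+1)) ∂μ := by
  set m := ∫ x, (x i) ^ (2*(k+1)) ∂μ with hm
  have h1 : ∀ τ : ℝ, ∑ l ∈ Finset.range (2*(k+1)+1),
      (∫ x, (x j)^l * (x i)^(2*(k+1)-l) ∂μ) * ((2*(k+1)).choose l) * τ ^ l
      = (1 + τ^2)^(k+1) * m := by
    intro τ
    have h := hμ.pow i (Pi.single i 1 + Pi.single j τ) (k+1)
    rw [← hm] at h
    have e : (Pi.single i 1 + Pi.single j τ) ⬝ᵥ (Pi.single i 1 + Pi.single j τ : Fin n → ℝ)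
        = 1 + τ ^ 2 := by
      simp [dotProduct_add, hij, hij.symm, sq]
    rw [e] at h
    rw [← h]
    simp only [add_dotProduct, single_dotProduct, one_mul]
    simp_rw [add_comm (_ : ℝ) (τ * _), add_pow]
    rw [integral_finsetSum _ (fun l _ => hμ.integrable _ (by fun_prop))]
    refine Finset.sum_congr rfl fun l _ => ?_
    rw [mul_assoc, mul_comm, ← integral_const_mul]
    congr 1
    ext x
    ring
  have h2 : (∑ l ∈ Finset.range (2*(k+1)+1),
      C ((∫ x, (x j)^l * (x i)^(2*(k+1)-l) ∂μ) * ((2*(k+1)).choose l)) * X ^ l : ℝ[X])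
      = (1 + X^2)^(k+1) * C m := by
    apply Polynomial.funext
    intro τ
    rw [eval_finsetSum]
    simpa using h1 τ
  have h3 := congrArg (fun p => coeff p 2) h2
  simp only [finsetSum_coeff, coeff_C_mul, coeff_X_pow, coeff_mul_C] at h3
  have h4 : ((1 + X^2 : ℝ[X])^(k+1)).coeff 2 = k + 1 := by
    have : (1 + X^2 : ℝ[X])^(k+1) = expand ℝ 2 ((1 + X)^(k+1)) := by simp
    rw [this, show (2:ℕ) = 1 * 2 by rfl, show (1 * 2 : ℕ) = 2 by rfl]
    have := coeff_expand_mul (R := ℝ) (p := 2) (by norm_num) ((1 + X)^(k+1)) 1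
    rw [one_mul] at this
    rw [this, coeff_one_add_X_pow]; simp
  rw [h4] at h3
  have h5 : ((2*(k+1)).choose 2 : ℝ) = (k+1) * (2*k+1) := by
    rw [Nat.cast_choose_two]; push_cast; ring
  rw [Finset.sum_eq_single 2 (by intro l _ hl; simp [hl.symm]) (by simp)] at h3
  simp only [if_true, mul_one] at h3
  rw [h5] at h3
  have h6 : 2 * (k+1) - 2 = 2 * k := by omega
  rw [h6] at h3
  simp_rw [mul_comm ((_ : ℝ) ^ (2*k)) _]
  have : (k + 1 : ℝ) ≠ 0 := by positivity
  apply mul_left_cancel₀ this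
  linarith

lemma IsUnif.mrec {n : ℕ} {μ : Measure (Fin n → ℝ)} {R : ℝ} (hμ : IsUnif μ R) (i : Fin n) (k : ℕ) :
    (n + 2 * k) * ∫ x, (x i) ^ (2*(k+1)) ∂μ = (2*k+1) * R^2 * ∫ x, (x i) ^ (2*k) ∂μ := by
  set m := ∫ x, (x i) ^ (2*(k+1)) ∂μ with hm
  have h1 : ∑ j, ∫ x, (x i) ^ (2*k) * (x j)^2 ∂μ = R^2 * ∫ x, (x i) ^ (2*k) ∂μ := by
    rw [← integral_finsetSum _ (fun l _ => hμ.integrable _ (by fun_prop)), ← integral_const_mul]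
    apply integral_congr_ae
    filter_upwards [hμ.supp] with x hx
    rw [← Finset.mul_sum, hx, mul_comm]
  rw [← Finset.add_sum_erase _ _ (Finset.mem_univ i)] at h1
  have h2 : ∀ j ∈ Finset.univ.erase i, ∫ x, (x i) ^ (2*k) * (x j)^2 ∂μ = m / (2*k+1) := by
    intro j hj
    rw [hm, ← hμ.mixed i j (Finset.ne_of_mem_erase hj) k]
    field_simp
  rw [Finset.sum_congr rfl h2, Finset.sum_const, Finset.card_erase_of_mem (Finset.mem_univ i),
    Finset.card_univ, Fintype.card_fin, nsmul_eq_mul, Nat.cast_sub (Fin.pos i)] at h1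
  have h3 : ∫ x, (x i) ^ (2*k) * (x i)^2 ∂μ = m := by
    rw [hm]; congr 1; ext x; ring
  rw [h3] at h1
  have e : (2 * k + 1 : ℝ) ≠ 0 := by positivity
  rw [mul_assoc, ← h1]
  push_cast
  field_simp
  ring

lemma IsUnif.moment {n : ℕ} {μ : Measure (Fin n → ℝ)} {R : ℝ} (hμ : IsUnif μ R) (i : Fin n) (k : ℕ) :
    (∫ x, (x i) ^ (2*k) ∂μ) / (2*k).factorial
      = (R^2/4)^k / (k.factorial * rp (n/2) k) := by
  have := hμ.prob
  have hn : (0:ℝ) < n := by exact_mod_cast Fin.pos i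
  induction k with
  | zero => simp [rp]
  | succ k ih =>
    have h := hμ.mrec i k
    have hP := rp_pos (half_pos hn) k
    have hnk : (0:ℝ) < n + 2 * k := by positivity
    have e1 : ∫ x, (x i) ^ (2*(k+1)) ∂μ
       = (2*k+1) * R^2 * (∫ x, (x i) ^ (2*k) ∂μ) / (n + 2 * k) := by
      rw [eq_div_iff hnk.ne', mul_comm, h]
    have e2 : ∫ x, (x i) ^ (2*k) ∂μ = (R^2/4)^k / (k.factorial * rp (n/2) k) * (2*k).factorial := by
      rw [← ih]; field_simp
    rw [e1, e2, rp_succ, show 2*(k+1) = 2*k+1+1 by ring, Nat.factorial_succ, Nat.factorial_succ,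
      Nat.factorial_succ, pow_succ]
    have e3 : (n:ℝ)/2 + k = (n + 2*k)/2 := by ring
    rw [e3]
    push_cast
    field_simp
    ring

open Matrix in
lemma IsUnif.mgf {n : ℕ} {μ : Measure (Fin n → ℝ)} {R : ℝ} (hμ : IsUnif μ R) (i : Fin n)
    (y : Fin n → ℝ) :
    HasSum (fun k : ℕ => ((y ⬝ᵥ y) * R^2 / 4) ^ k / (k.factorial * rp (n/2) k))
      (∫ x, exp (y ⬝ᵥ x) ∂μ) := by
  have := hμ.prob
  have hd : Continuous (fun x : Fin n → ℝ => y ⬝ᵥ x) := by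
    unfold dotProduct; fun_prop
  have hcosh : ∫ x, exp (y ⬝ᵥ x) ∂μ = ∫ x, cosh (y ⬝ᵥ x) ∂μ := by
    have h1 : ∫ x, exp (y ⬝ᵥ x) ∂μ = ∫ x, exp (-(y ⬝ᵥ x)) ∂μ := by
      have := hμ.congr y (-y) (by simp) exp (by fun_prop)
      simpa using this
    simp_rw [Real.cosh_eq]
    rw [integral_div, integral_add (hμ.integrable _ (by fun_prop)) (hμ.integrable _ (by fun_prop)),
      ← h1]
    ring
  rw [hcosh]
  have hterm : ∀ k : ℕ, ∫ x, (y ⬝ᵥ x) ^ (2*k) / (2*k).factorial ∂μ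
      = ((y ⬝ᵥ y) * R^2 / 4) ^ k / (k.factorial * rp (n/2) k) := by
    intro k
    rw [integral_div, hμ.pow i, mul_div_assoc, hμ.moment i, mul_div_assoc, mul_pow, mul_div_assoc]
  simp_rw [← hterm]
  have hc : ∀ x : Fin n → ℝ, HasSum (fun k : ℕ => (y ⬝ᵥ x) ^ (2*k) / (2*k).factorial)
      (cosh (y ⬝ᵥ x)) := fun x => Real.hasSum_cosh _
  have hb : ∀ᵐ x ∂μ, ∀ k : ℕ, ‖(y ⬝ᵥ x) ^ (2*k) / ((2*k).factorial : ℝ)‖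
      ≤ √((y ⬝ᵥ y) * R^2) ^ (2*k) / (2*k).factorial := by
    filter_upwards [hμ.supp] with x hx k
    have hcs : (y ⬝ᵥ x)^2 ≤ (y ⬝ᵥ y) * R^2 := by
      have := Finset.sum_mul_sq_le_sq_mul_sq Finset.univ y x
      rw [hx] at this
      simpa [dotProduct, ← sq] using this
    rw [norm_div, Real.norm_natCast, norm_pow, Real.norm_eq_abs]
    gcongr
    exact Real.abs_le_sqrt hcs
  have hs : Summable (fun k : ℕ => √((y ⬝ᵥ y) * R^2) ^ (2*k) / ((2*k).factorial : ℝ)) :=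
    (Real.hasSum_cosh _).summable
  apply hasSum_integral_of_dominated_convergence
    (fun k _ => √((y ⬝ᵥ y) * R^2) ^ (2*k) / ((2*k).factorial : ℝ))
  · intro k
    exact (Continuous.aestronglyMeasurable (by fun_prop))
  · intro k
    filter_upwards [hb] with x hx using hx k
  · exact Filter.Eventually.of_forall fun _ => hs
  · exact integrable_const _
  · exact Filter.Eventually.of_forall hc

lemma log_poly_le {K : ℝ} (hK : 0 ≤ K) {n : ℕ} (hn : 2 ≤ n) {w : ℝ} (hw0 : 0 < w)
    (hw : w ≤ (1 + K) * n ^ 2) :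
    log w ≤ (log (1 + K) / log 2 + 2) * log n := by
  have hn' : (2:ℝ) ≤ n := by exact_mod_cast hn
  have h2 : 0 < log 2 := Real.log_pos one_lt_two
  have hl : log 2 ≤ log n := Real.log_le_log (by norm_num) hn'
  have h1 := Real.log_le_log hw0 hw
  rw [Real.log_mul (by positivity) (by positivity), Real.log_pow] at h1
  have hK' : 0 ≤ log (1 + K) := Real.log_nonneg (by linarith)
  have : log (1 + K) ≤ log (1 + K) / log 2 * log n := by
    rw [div_mul_eq_mul_div, le_div_iff₀ h2]; gcongr
  push_cast at h1
  linarith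

lemma sq_sqrt_sub {q ρ : ℝ} (hq : 0 ≤ q) (h : q ^ 2 = ρ) : (q - 1)^2 ≤ (ρ - 1)^2 := by
  subst h
  have : (q^2 - 1)^2 = (q-1)^2 * (q+1)^2 := by ring
  rw [this]
  have : 1 ≤ (q+1)^2 := by nlinarith
  nlinarith [sq_nonneg (q-1)]

open Matrix in
lemma Qcc_eq_s14 {n : ℕ} (N Γ : ℝ) (hN : 0 < N) (hΓ : 0 < Γ)
    (σ : ∀ n : ℕ, ℝ → Measure (Fin n → ℝ)) (hμ : IsUnif (σ n √(n * Γ)) √(n * Γ)) (y : Fin n → ℝ) :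
    Qcc σ N Γ n y = (2 * π * N) ^ (-(n : ℝ)/2) * (exp (-(∑ i, (y i)^2 + n * Γ) / (2 * N)) *
      ∫ x, exp ((N⁻¹ • y) ⬝ᵥ x) ∂(σ n √(n * Γ))) := by
  unfold Qcc
  rw [integral_const_mul]
  congr 1
  rw [← integral_const_mul]
  apply integral_congr_ae
  filter_upwards [hμ.supp] with x hx
  rw [Real.sq_sqrt (by positivity)] at hx
  rw [← Real.exp_add]
  congr 1
  have : ∑ i, (y i - x i)^2 = ∑ i, (y i)^2 + n * Γ - 2 * (y ⬝ᵥ x) := by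
    rw [← hx]
    simp only [dotProduct, Finset.mul_sum]
    rw [← Finset.sum_add_distrib, ← Finset.sum_sub_distrib]
    refine Finset.sum_congr rfl fun i _ => by ring
  rw [this, smul_dotProduct, smul_eq_mul]
  field_simp
  ring

lemma core_upper {N Γ T Φ : ℝ} (hN : 0 < N) (hΓ : 0 < Γ) {n : ℕ} (hn : 2 ≤ n) (hT : 0 ≤ T)
    (hTu : T ≤ n * (Γ + N + 1)) (hΦ : 0 < Φ)
    (h : HasSum (fun k : ℕ => (T / N^2 * (n * Γ) / 4) ^ k / (k.factorial * rp (n/2) k)) Φ) :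
    n / 2 * (log (Γ + N) - log N) - (T + n * Γ) / (2 * N) + log Φ + T / (2 * (Γ + N))
      ≤ (log (1 + (2 + ((Γ + N + 1) / N^2 * Γ / 2)^2)) / log 2 + 2) * log n := by
  have hn' : (2:ℝ) ≤ n := by exact_mod_cast hn
  have hn0 : (0:ℝ) < n := by linarith
  have hs : 0 < Γ + N := by linarith
  set v := (n:ℝ) / 2 * ((Γ + N) / N) with hv
  have hv0 : 0 < v := by positivity
  have hU := upper_series (a := (n:ℝ)/2) (v := v) (by linarith) hv0 (by positivity) h
  set w := 3 + (T / N^2 * (n * Γ) / 4)^2 / ((n:ℝ)/2)^2 with hw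
  have hw0 : 0 < w := by positivity
  have h1 := Real.log_le_log hΦ hU
  rw [Real.log_mul hw0.ne' (Real.exp_pos _).ne', Real.log_exp, hv,
    Real.log_mul (by positivity) (by positivity), Real.log_div hs.ne' hN.ne'] at h1
  have h2 := log_poly_le (K := 2 + ((Γ + N + 1) / N^2 * Γ / 2)^2) (by positivity) hn hw0 (by
    have e : w = 3 + (T / N^2 * Γ / 2)^2 := by rw [hw]; field_simp; ring
    have hle : T / N^2 * Γ / 2 ≤ n * ((Γ + N + 1) / N^2 * Γ / 2) := by
      calc _ ≤ (n * (Γ + N + 1)) / N^2 * Γ / 2 := by gcongr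
        _ = _ := by ring
    have := pow_le_pow_left₀ (by positivity) hle 2
    rw [mul_pow] at this
    rw [e]
    nlinarith)
  have e1 : (n:ℝ) / 2 * ((Γ + N) / N) = n / 2 + n * Γ / (2 * N) := by field_simp; ring
  have e2 : T / N^2 * (n * Γ) / 4 / (n / 2 * ((Γ + N) / N)) = T / (2 * N) - T / (2 * (Γ + N)) := by
    field_simp; ring
  rw [e2, e1] at h1
  have e3 : (T + n * Γ) / (2 * N) = T / (2*N) + n * Γ / (2 * N) := by ring
  rw [e3]
  linarith

lemma core_lower {N Γ T Φ Δ : ℝ} (hN : 0 < N) (hΓ : 0 < Γ) {n : ℕ} (hn : 2 ≤ n) (hT : 0 ≤ T)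
    (hTu : T ≤ n * (Γ + N + 1)) (hΦ : 0 < Φ) (hΔ : |T / n - (Γ + N)| ≤ Δ)
    (h : HasSum (fun k : ℕ => (T / N^2 * (n * Γ) / 4) ^ k / (k.factorial * rp (n/2) k)) Φ) :
    -(Γ / (2 * N * (Γ + N)^2) * (n * Δ^2)
      + (|log (∑' k : ℕ, 1 / (1 + (k:ℝ) ^ 2))| / log 2 +
        (log (1 + ((Γ / (2 * N))^2 * ((Γ + N + 1) / (Γ + N)))) / log 2 + 2)) * log n)
      ≤ n / 2 * (log (Γ + N) - log N) - (T + n * Γ) / (2 * N) + log Φ + T / (2 * (Γ + N)) := by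
  have hn' : (2:ℝ) ≤ n := by exact_mod_cast hn
  have hn0 : (0:ℝ) < n := by linarith
  have hs : 0 < Γ + N := by linarith
  set q := √(T / (n * (Γ + N))) with hq
  have hq2 : q ^ 2 = T / (n * (Γ + N)) := Real.sq_sqrt (by positivity)
  have hq0 : 0 ≤ q := Real.sqrt_nonneg _
  set r := (n * Γ / (2 * N)) * q with hr
  have hx1 : Γ / (Γ + N) < 1 := by rw [div_lt_one hs]; linarith
  have hr2 : r ^ 2 = T * n * Γ^2 / (4 * N^2 * (Γ + N)) := by
    rw [hr, mul_pow, hq2]; field_simp; ring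
  have hrz : r ^ 2 / (Γ / (Γ + N)) = T / N^2 * (n * Γ) / 4 := by
    rw [hr2]; field_simp
  rw [← hrz] at h
  have hL := lower_series (half_pos hn0) (by positivity) hx1 h
  set S := ∑' k : ℕ, 1 / (1 + (k:ℝ) ^ 2) with hS
  have hpos : 0 < S * ((1 + r ^ 2) * Φ) := (Real.exp_pos _).trans_le hL
  have hS0 : 0 < S := by
    by_contra hc
    push Not at hc
    have : 0 ≤ (1 + r^2) * Φ := by positivity
    nlinarith
  have h1 := Real.log_le_log (Real.exp_pos _) hL
  rw [Real.log_exp, Real.log_mul hS0.ne' (by positivity), Real.log_mul (by positivity) hΦ.ne'] at h1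
  have e0 : 1 - Γ / (Γ + N) = N / (Γ + N) := by field_simp; ring
  rw [e0, Real.log_div hN.ne' hs.ne'] at h1
  have h2 := log_poly_le (K := (Γ / (2 * N))^2 * ((Γ + N + 1) / (Γ + N))) (by positivity) hn
    (show 0 < 1 + r^2 by positivity) (by
    have : r ^ 2 ≤ (Γ / (2 * N))^2 * ((Γ + N + 1) / (Γ + N)) * n^2 := by
      rw [hr2]
      calc _ ≤ (n * (Γ + N + 1)) * n * Γ^2 / (4 * N^2 * (Γ + N)) := by gcongr
        _ = _ := by field_simp; norm_num
    nlinarith)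
  have h3 : log S ≤ |log S| / log 2 * log n := by
    refine (le_abs_self _).trans ?_
    rw [div_mul_eq_mul_div, le_div_iff₀ (Real.log_pos one_lt_two)]
    gcongr
  have h4 := sq_sqrt_sub hq0 hq2
  have h5 : (T / (n * (Γ + N)) - 1)^2 ≤ Δ^2 / (Γ + N)^2 := by
    have : T / (n * (Γ + N)) - 1 = (T / n - (Γ + N)) / (Γ + N) := by field_simp
    rw [this, div_pow]
    refine div_le_div_of_nonneg_right ?_ (by positivity)
    exact sq_le_sq' (abs_le.mp hΔ).1 (abs_le.mp hΔ).2
  have h6 : n * Γ / (2 * N) * (q - 1)^2 ≤ Γ / (2 * N * (Γ + N)^2) * (n * Δ^2) := by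
    calc _ ≤ n * Γ / (2 * N) * (Δ^2 / (Γ + N)^2) := by gcongr; exact h4.trans h5
      _ = _ := by field_simp
  have e5 : T = q^2 * (n * (Γ + N)) := by rw [hq2]; field_simp
  have e6 : (T + n * Γ) / (2 * N) - T / (2 * (Γ + N)) = 2 * r + n * Γ / (2 * N) * (q - 1)^2 := by
    rw [hr, e5]; field_simp; ring
  linarith

/-- uniform `O(log n + nΔ²)` bound on `|log(Q^cc_{Γ,n}(y)/Q*ₙ(y))|`,
where `Q*ₙ` is the density of `N(0,(Γ+N)·Iₙ)`, over the typical set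
`{y : Γ+N−Δ ≤ ‖y‖²/n ≤ Γ+N+Δ}`. -/
theorem log_ratio_Qcc_Qstar_bound (N Γ : ℝ) (hN : 0 < N) (hΓ : 0 < Γ)
    (σ : ∀ n : ℕ, ℝ → Measure (Fin n → ℝ)) (hσ : UniformSphereFamily σ) :
    ∃ (C : ℝ) (n₀ : ℕ) (Δ₀ : ℝ), 0 < C ∧ 0 < n₀ ∧ 0 < Δ₀ ∧
      ∀ n : ℕ, n₀ ≤ n → ∀ Δ : ℝ, 0 ≤ Δ → Δ ≤ Δ₀ →
        ∀ y : Fin n → ℝ,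
          Γ + N - Δ ≤ (∑ i, (y i)^2) / n → (∑ i, (y i)^2) / n ≤ Γ + N + Δ →
          |Real.log (Qcc σ N Γ n y /
              ((2 * π * (Γ + N)) ^ (-(n : ℝ)/2)
                * Real.exp (-(∑ i, (y i)^2) / (2 * (Γ + N)))))|
            ≤ C * (Real.log n + n * Δ^2) := by
  have hs : 0 < Γ + N := by linarith
  set C1 := (log (1 + (2 + ((Γ + N + 1) / N^2 * Γ / 2)^2)) / log 2 + 2) with hC1
  set C2 := Γ / (2 * N * (Γ + N)^2) with hC2
  set C3 := (|log (∑' k : ℕ, 1 / (1 + (k:ℝ) ^ 2))| / log 2 +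
        (log (1 + ((Γ / (2 * N))^2 * ((Γ + N + 1) / (Γ + N)))) / log 2 + 2)) with hC3
  have hl2 : 0 < log 2 := Real.log_pos one_lt_two
  have p1 : 0 < C1 := by
    have : 0 ≤ log (1 + (2 + ((Γ + N + 1) / N^2 * Γ / 2)^2)) :=
      Real.log_nonneg (by nlinarith [sq_nonneg ((Γ + N + 1) / N^2 * Γ / 2)])
    positivity
  have p2 : 0 < C2 := by positivity
  have p3 : 0 < C3 := by
    have : 0 ≤ log (1 + ((Γ / (2 * N))^2 * ((Γ + N + 1) / (Γ + N)))) :=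
      Real.log_nonneg (by
        have : 0 ≤ ((Γ / (2 * N))^2 * ((Γ + N + 1) / (Γ + N))) := by positivity
        linarith)
    positivity
  clear_value C1 C2 C3
  refine ⟨C1 + C2 + C3, 2, 1, by positivity, by norm_num, one_pos, ?_⟩
  intro n hn Δ hΔ0 hΔ1 y hy1 hy2
  have hn' : (2:ℝ) ≤ n := by exact_mod_cast hn
  have hn0 : (0:ℝ) < n := by linarith
  have hR : 0 < √((n:ℝ) * Γ) := Real.sqrt_pos.mpr (by positivity)
  obtain ⟨hp, hsupp, hinv⟩ := hσ n (by omega) _ hR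
  have hμ : IsUnif (σ n √(n * Γ)) √(n * Γ) := ⟨hp, hsupp, hinv⟩
  have hm := hμ.mgf ⟨0, by omega⟩ (N⁻¹ • y)
  have hΦ : 0 < ∫ x, exp ((N⁻¹ • y) ⬝ᵥ x) ∂(σ n √(n * Γ)) := by
    apply integral_exp_pos
    apply hμ.integrable
    unfold dotProduct
    fun_prop
  rw [Qcc_eq_s14 N Γ hN hΓ σ hμ]
  set Φ := ∫ x, exp ((N⁻¹ • y) ⬝ᵥ x) ∂(σ n √(n * Γ)) with hΦd
  set T := ∑ i, (y i)^2 with hT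
  have hT0 : 0 ≤ T := Finset.sum_nonneg fun i _ => sq_nonneg _
  have hyy : (N⁻¹ • y) ⬝ᵥ (N⁻¹ • y) = T / N^2 := by
    have : y ⬝ᵥ y = T := by simp [hT, dotProduct, sq]
    rw [smul_dotProduct, dotProduct_smul, this, smul_eq_mul, smul_eq_mul]
    field_simp
  rw [hyy, Real.sq_sqrt (by positivity)] at hm
  have hTu : T ≤ n * (Γ + N + 1) := by
    rw [div_le_iff₀ hn0] at hy2
    nlinarith
  have hab : |T / n - (Γ + N)| ≤ Δ := by rw [abs_le]; constructor <;> linarith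
  have hU := core_upper hN hΓ hn hT0 hTu hΦ hm
  have hL := core_lower hN hΓ hn hT0 hTu hΦ hab hm
  rw [← hC1] at hU
  rw [← hC2, ← hC3] at hL
  clear_value Φ T
  have elog : log ((2 * π * N) ^ (-(n : ℝ)/2) * (exp (-(T + n * Γ) / (2 * N)) * Φ) /
      ((2 * π * (Γ + N)) ^ (-(n : ℝ)/2) * exp (-T / (2 * (Γ + N)))))
      = n / 2 * (log (Γ + N) - log N) - (T + n * Γ) / (2 * N) + log Φ + T / (2 * (Γ + N)) := by
    have hpi : 0 < 2 * π := by positivity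
    have hA : 0 < 2 * π * N := by positivity
    have hB : 0 < 2 * π * (Γ + N) := by positivity
    have hA' := Real.rpow_pos_of_pos hA (-(n : ℝ)/2)
    have hB' := Real.rpow_pos_of_pos hB (-(n : ℝ)/2)
    rw [Real.log_div (by positivity) (by positivity), Real.log_mul hA'.ne' (by positivity),
      Real.log_mul (by positivity) hΦ.ne', Real.log_mul hB'.ne' (by positivity), Real.log_exp,
      Real.log_exp, Real.log_rpow hA, Real.log_rpow hB, Real.log_mul hpi.ne' hN.ne',
      Real.log_mul hpi.ne' hs.ne']
    ring
  rw [elog, abs_le]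
  have hln : 0 ≤ log (n:ℝ) := Real.log_nonneg (by linarith)
  have hnd : 0 ≤ n * Δ^2 := by positivity
  have a1 := mul_nonneg p1.le hln
  have a2 := mul_nonneg p2.le hln
  have a3 := mul_nonneg p3.le hln
  have b1 := mul_nonneg p1.le hnd
  have b2 := mul_nonneg p2.le hnd
  have b3 := mul_nonneg p3.le hnd
  constructor <;> linarith
end

section
/- Fix N > 0, n ≥ 1, R > 0 and θ > 0, and let M = ⌈exp(nR)⌉. Let P be a Borel probability measure on ℝⁿ, let w(y|x) = (2πN)^{-n/2} exp(−‖y−x‖²/(2N)), and let q(y) = ∫ w(y|x) dP(x) be the output density. Construct a random code as follows: draw codewords X₁,…,X_M i.i.d. from P; given channel output y, the decoder outputs the smallest index m ∈ {1,…,M} such that (1/n)·log( w(y|X_m)/q(y) ) > R + θ, and outputs 1 if no such index exists. Then the average error probability — the probability, over a uniformly distributed message m ∈ {1,…,M}, the i.i.d. codebook, and independent noise Z ~ N(0, N·Iₙ), that the decoder applied to X_m + Z does not output m — satisfies: average error ≤ Pr_{X~P, Y=X+Z}( (1/n)·log( w(Y|X)/q(Y) ) ≤ R + θ ) + exp(−nθ).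 -/
open Real MeasureTheory ProbabilityTheory Classical

/-- The `n`-letter AWGN transition density `w(y|x)` with noise variance `N`. -/
noncomputable def w (N : ℝ) (n : ℕ) (y x : Fin n → ℝ) : ℝ :=
  (2 * π * N) ^ (-(n : ℝ)/2) * Real.exp (-(∑ i, (y i - x i)^2) / (2 * N))

/-- The output density `q(y) = ∫ w(y|x) dP(x)` induced by the input law `P`. -/
noncomputable def q (N : ℝ) (n : ℕ) (P : Measure (Fin n → ℝ)) (y : Fin n → ℝ) : ℝ :=
  ∫ x, w N n y x ∂P

/-- Threshold decoder: outputs the smallest index `m` whose codeword `c m` satisfies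
`(1/n)·log(w(y|c m)/q(y)) > R + θ`, and outputs the first message if no index does. -/
noncomputable def decode (N : ℝ) (n : ℕ) (P : Measure (Fin n → ℝ)) (R θ : ℝ)
    {M : ℕ} (hM : 0 < M) (c : Fin M → (Fin n → ℝ)) (y : Fin n → ℝ) : Fin M :=
  if h : (Finset.univ.filter fun m : Fin M =>
      R + θ < (1/(n : ℝ)) * Real.log (w N n y (c m) / q N n P y)).Nonempty
  then (Finset.univ.filter fun m : Fin M =>
      R + θ < (1/(n : ℝ)) * Real.log (w N n y (c m) / q N n P y)).min' h
  else ⟨0, hM⟩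

lemma w_nonneg' (N : ℝ) (hN : 0 < N) (n : ℕ) (y x : Fin n → ℝ) : 0 ≤ w N n y x := by
  unfold w; positivity

lemma w_cont (N : ℝ) (n : ℕ) :
    Continuous (fun p : (Fin n → ℝ) × (Fin n → ℝ) => w N n p.1 p.2) := by
  unfold w; fun_prop

lemma q_meas (N : ℝ) (n : ℕ) (P : Measure (Fin n → ℝ)) [IsProbabilityMeasure P] :
    Measurable (q N n P) := by
  have h : StronglyMeasurable (fun p : (Fin n → ℝ) × (Fin n → ℝ) => w N n p.1 p.2) :=
    (w_cont N n).stronglyMeasurable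
  exact (h.integral_prod_right (ν := P)).measurable

lemma info_meas (N : ℝ) (n : ℕ) (P : Measure (Fin n → ℝ)) [IsProbabilityMeasure P] :
    Measurable (fun p : (Fin n → ℝ) × (Fin n → ℝ) =>
      (1/(n : ℝ)) * Real.log (w N n p.2 p.1 / q N n P p.2)) := by
  have h1 : Measurable (fun p : (Fin n → ℝ) × (Fin n → ℝ) => w N n p.2 p.1) :=
    ((w_cont N n).comp (f := fun p : (Fin n → ℝ) × (Fin n → ℝ) => (p.2, p.1))
      (by fun_prop)).measurable
  have h2 : Measurable (fun p : (Fin n → ℝ) × (Fin n → ℝ) => q N n P p.2) :=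
    (q_meas N n P).comp measurable_snd
  exact (Real.measurable_log.comp (h1.div h2)).const_mul _

lemma w_int (N : ℝ) (hN : 0 < N) (n : ℕ) (P : Measure (Fin n → ℝ)) [IsProbabilityMeasure P]
    (y : Fin n → ℝ) : Integrable (fun x => w N n y x) P := by
  refine Integrable.of_bound (C := (2 * π * N) ^ (-(n : ℝ)/2)) ?_ ?_
  · exact ((w_cont N n).comp (by fun_prop : Continuous fun x : Fin n → ℝ => (y, x))).aestronglyMeasurable
  · refine Filter.Eventually.of_forall fun x => ?_
    rw [Real.norm_of_nonneg (w_nonneg' N hN n y x)]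
    unfold w
    refine mul_le_of_le_one_right (by positivity) ?_
    rw [Real.exp_le_one_iff, neg_div]
    have : 0 ≤ (∑ i, (y i - x i)^2) / (2 * N) :=
      div_nonneg (Finset.sum_nonneg fun i _ => sq_nonneg _) (by positivity)
    linarith

/-- Markov: for fixed `y`, an independent codeword passes the threshold with small probability. -/
lemma markov_y (N : ℝ) (hN : 0 < N) (n : ℕ) (hn : 1 ≤ n) (a : ℝ) (ha : 0 < a)
    (P : Measure (Fin n → ℝ)) [IsProbabilityMeasure P] (y : Fin n → ℝ) :
    P {x | a < (1/(n : ℝ)) * Real.log (w N n y x / q N n P y)}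
      ≤ ENNReal.ofReal (Real.exp (-(n * a))) := by
  have hq : 0 ≤ q N n P y := integral_nonneg fun x => w_nonneg' N hN n y x
  have hn' : (0:ℝ) < n := by exact_mod_cast hn
  have hint : Integrable (fun x => w N n y x / q N n P y) P := (w_int N hN n P y).div_const _
  have hnn : 0 ≤ᵐ[P] (fun x => w N n y x / q N n P y) :=
    Filter.Eventually.of_forall fun x => div_nonneg (w_nonneg' N hN n y x) hq
  have hm := mul_meas_ge_le_integral_of_nonneg hnn hint (Real.exp (n * a))
  have hle : ∫ x, w N n y x / q N n P y ∂P ≤ 1 := by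
    rw [integral_div]
    exact div_self_le_one _
  have hsub : {x | a < (1/(n : ℝ)) * Real.log (w N n y x / q N n P y)} ⊆
      {x | Real.exp (n * a) ≤ w N n y x / q N n P y} := by
    intro x hx
    simp only [Set.mem_ofPred_eq] at hx ⊢
    have hlog : n * a < Real.log (w N n y x / q N n P y) := by
      rw [one_div, inv_mul_eq_div, lt_div_iff₀ hn'] at hx
      linarith
    have hpos : 0 < w N n y x / q N n P y := by
      rcases (div_nonneg (w_nonneg' N hN n y x) hq).lt_or_eq with h | h
      · exact h
      · rw [← h, Real.log_zero] at hlog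
        have := mul_pos hn' ha
        linarith
    exact ((Real.lt_log_iff_exp_lt hpos).1 hlog).le
  refine (measure_mono hsub).trans ?_
  rw [← ENNReal.ofReal_toReal (measure_ne_top P {x | Real.exp (n * a) ≤ w N n y x / q N n P y})]
  apply ENNReal.ofReal_le_ofReal
  rw [Real.exp_neg, ← one_div, le_div_iff₀ (Real.exp_pos _), mul_comm]
  exact hm.trans hle

lemma pair_law {n M : ℕ} (P : Measure (Fin n → ℝ)) [IsProbabilityMeasure P] (i j : Fin M)
    (hij : i ≠ j) :
    (Measure.pi fun _ : Fin M => P).map (fun c => (c i, c j)) = P.prod P := by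
  have hI : iIndepFun (fun (k : Fin M) (c : Fin M → (Fin n → ℝ)) => c k)
      (Measure.pi fun _ : Fin M => P) :=
    iIndepFun_pi (X := fun _ x => x) (fun _ => aemeasurable_id)
  have h2 := hI.indepFun hij
  rw [indepFun_iff_map_prod_eq_prod_map_map (measurable_pi_apply i).aemeasurable
    (measurable_pi_apply j).aemeasurable] at h2
  rw [h2]
  rw [(measurePreserving_eval (fun _ : Fin M => P) i).map_eq,
    (measurePreserving_eval (fun _ : Fin M => P) j).map_eq]

lemma other_bound (N : ℝ) (hN : 0 < N) (n : ℕ) (hn : 1 ≤ n) (a : ℝ) (ha : 0 < a) (M : ℕ)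
    (P : Measure (Fin n → ℝ)) [IsProbabilityMeasure P]
    (γ : Measure (Fin n → ℝ)) [IsProbabilityMeasure γ] (m k : Fin M) (hk : k ≠ m) :
    ((Measure.pi fun _ : Fin M => P).prod γ)
      {p | a < (1/(n : ℝ)) * Real.log (w N n (p.1 m + p.2) (p.1 k) / q N n P (p.1 m + p.2))}
      ≤ ENNReal.ofReal (Real.exp (-(n * a))) := by
  have hf := info_meas N n P
  have hS : MeasurableSet {p : (Fin M → (Fin n → ℝ)) × (Fin n → ℝ) |
      a < (1/(n : ℝ)) * Real.log (w N n (p.1 m + p.2) (p.1 k) / q N n P (p.1 m + p.2))} := by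
    refine measurableSet_lt measurable_const (hf.comp (f := fun p : (Fin M → (Fin n → ℝ)) × (Fin n → ℝ) => (p.1 k, p.1 m + p.2)) ?_)
    fun_prop
  rw [Measure.prod_apply_symm hS]
  have key : ∀ z, (Measure.pi fun _ : Fin M => P)
      ((fun c => (c, z)) ⁻¹' {p : (Fin M → (Fin n → ℝ)) × (Fin n → ℝ) |
      a < (1/(n : ℝ)) * Real.log (w N n (p.1 m + p.2) (p.1 k) / q N n P (p.1 m + p.2))})
      ≤ ENNReal.ofReal (Real.exp (-(n * a))) := by
    intro z
    have hT : MeasurableSet {p : (Fin n → ℝ) × (Fin n → ℝ) |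
        a < (1/(n : ℝ)) * Real.log (w N n (p.2 + z) p.1 / q N n P (p.2 + z))} := by
      refine measurableSet_lt measurable_const (hf.comp (f := fun p : (Fin n → ℝ) × (Fin n → ℝ) => (p.1, p.2 + z)) ?_)
      fun_prop
    have h1 : (Measure.pi fun _ : Fin M => P)
      ((fun c => (c, z)) ⁻¹' {p : (Fin M → (Fin n → ℝ)) × (Fin n → ℝ) |
      a < (1/(n : ℝ)) * Real.log (w N n (p.1 m + p.2) (p.1 k) / q N n P (p.1 m + p.2))})
        = (P.prod P) {p : (Fin n → ℝ) × (Fin n → ℝ) |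
        a < (1/(n : ℝ)) * Real.log (w N n (p.2 + z) p.1 / q N n P (p.2 + z))} := by
      rw [← pair_law P k m hk, Measure.map_apply (by fun_prop) hT]
      rfl
    rw [h1, Measure.prod_apply_symm hT]
    calc _ ≤ ∫⁻ _ : Fin n → ℝ, ENNReal.ofReal (Real.exp (-(n * a))) ∂P :=
          lintegral_mono fun x => markov_y N hN n hn a ha P (x + z)
      _ = _ := by simp
  calc _ ≤ ∫⁻ _ : Fin n → ℝ, ENNReal.ofReal (Real.exp (-(n * a))) ∂γ :=
        lintegral_mono fun z => key z
    _ = _ := by simp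

lemma decode_ne (N : ℝ) (n : ℕ) (P : Measure (Fin n → ℝ)) (R θ : ℝ)
    {M : ℕ} (hM : 0 < M) (c : Fin M → (Fin n → ℝ)) (y : Fin n → ℝ) (m : Fin M)
    (h : decode N n P R θ hM c y ≠ m) :
    (1/(n : ℝ)) * Real.log (w N n y (c m) / q N n P y) ≤ R + θ ∨
    ∃ k ∈ Finset.univ.erase m, R + θ < (1/(n : ℝ)) * Real.log (w N n y (c k) / q N n P y) := by
  by_contra! hc
  obtain ⟨h1, h2⟩ := hc
  apply h
  have hne : (Finset.univ.filter fun m : Fin M =>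
      R + θ < (1/(n : ℝ)) * Real.log (w N n y (c m) / q N n P y)).Nonempty :=
    ⟨m, by simpa using h1⟩
  unfold decode
  rw [dif_pos hne]
  have hmem := Finset.min'_mem _ hne
  by_contra hne'
  exact absurd (Finset.mem_filter.1 hmem).2 (not_lt.2 (h2 _ (Finset.mem_erase.2 ⟨hne', Finset.mem_univ _⟩)))

lemma per_message (N : ℝ) (hN : 0 < N) (n : ℕ) (hn : 1 ≤ n)
    (R θ : ℝ) (hR : 0 < R) (hθ : 0 < θ)
    (M : ℕ) (hM : M = ⌈Real.exp (n * R)⌉₊) (hMpos : 0 < M)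
    (P : Measure (Fin n → ℝ)) [IsProbabilityMeasure P]
    (γ : Measure (Fin n → ℝ)) [IsProbabilityMeasure γ] (m : Fin M) :
    (((Measure.pi fun _ : Fin M => P).prod γ)
          {p : (Fin M → (Fin n → ℝ)) × (Fin n → ℝ) |
            decode N n P R θ hMpos p.1 (p.1 m + p.2) ≠ m}).toReal
      ≤ ((P.prod γ)
          {p : (Fin n → ℝ) × (Fin n → ℝ) |
            (1/(n : ℝ)) * Real.log (w N n (p.1 + p.2) p.1 / q N n P (p.1 + p.2)) ≤ R + θ}).toReal
        + Real.exp (-(n * θ)) := by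
  set μ := (Measure.pi fun _ : Fin M => P).prod γ with hμ
  set A : Set ((Fin n → ℝ) × (Fin n → ℝ)) := {p |
    (1/(n : ℝ)) * Real.log (w N n (p.1 + p.2) p.1 / q N n P (p.1 + p.2)) ≤ R + θ} with hA
  have hAm : MeasurableSet A := by
    refine measurableSet_le ((info_meas N n P).comp
      (f := fun p : (Fin n → ℝ) × (Fin n → ℝ) => (p.1, p.1 + p.2)) ?_) measurable_const
    fun_prop
  let B : Fin M → Set ((Fin M → (Fin n → ℝ)) × (Fin n → ℝ)) := fun k => {p |
    R + θ < (1/(n : ℝ)) * Real.log (w N n (p.1 m + p.2) (p.1 k) / q N n P (p.1 m + p.2))}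
  let g : (Fin M → (Fin n → ℝ)) × (Fin n → ℝ) → (Fin n → ℝ) × (Fin n → ℝ) :=
    Prod.map (Function.eval m) id
  have hg : MeasurePreserving g μ (P.prod γ) :=
    (measurePreserving_eval (fun _ : Fin M => P) m).prod (MeasurePreserving.id γ)
  have hsub : {p : (Fin M → (Fin n → ℝ)) × (Fin n → ℝ) |
      decode N n P R θ hMpos p.1 (p.1 m + p.2) ≠ m} ⊆
      g ⁻¹' A ∪ ⋃ k ∈ Finset.univ.erase m, B k := by
    intro p hp
    rcases decode_ne N n P R θ hMpos p.1 (p.1 m + p.2) m hp with h | ⟨k, hk, h⟩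
    · exact Or.inl h
    · exact Or.inr (Set.mem_biUnion hk h)
  have hB : ∀ k ∈ Finset.univ.erase m, μ.real (B k) ≤ Real.exp (-(n * (R + θ))) := by
    intro k hk
    exact ENNReal.toReal_le_of_le_ofReal (Real.exp_pos _).le
      (other_bound N hN n hn (R + θ) (by positivity) M P γ m k (Finset.ne_of_mem_erase hk))
  have hMle : (M : ℝ) - 1 ≤ Real.exp (n * R) := by
    have := Nat.ceil_lt_add_one (Real.exp_pos (n * R)).le
    rw [← hM] at this
    linarith
  calc μ.real _ ≤ μ.real (g ⁻¹' A ∪ ⋃ k ∈ Finset.univ.erase m, B k) := measureReal_mono hsub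
    _ ≤ μ.real (g ⁻¹' A) + μ.real (⋃ k ∈ Finset.univ.erase m, B k) := measureReal_union_le _ _
    _ ≤ (P.prod γ).real A + ∑ k ∈ Finset.univ.erase m, μ.real (B k) := by
        refine add_le_add (le_of_eq ?_) (measureReal_biUnion_finset_le _ _)
        exact congrArg ENNReal.toReal (hg.measure_preimage hAm.nullMeasurableSet)
    _ ≤ (P.prod γ).real A + Real.exp (-(n * θ)) := by
        gcongr
        refine (Finset.sum_le_sum hB).trans ?_
        rw [Finset.sum_const, Finset.card_erase_of_mem (Finset.mem_univ _), Finset.card_univ,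
          Fintype.card_fin, nsmul_eq_mul, Nat.cast_sub hMpos, Nat.cast_one]
        refine (mul_le_mul_of_nonneg_right hMle (Real.exp_pos _).le).trans (le_of_eq ?_)
        rw [← Real.exp_add]
        congr 1
        ring

/-- random coding bound: with `M = ⌈exp(nR)⌉` i.i.d. codewords drawn
from `P` and the threshold decoder, the average error probability is at most
`Pr((1/n)·log(w(Y|X)/q(Y)) ≤ R + θ) + exp(−nθ)`. -/
theorem random_coding_error_bound (N : ℝ) (hN : 0 < N) (n : ℕ) (hn : 1 ≤ n)
    (R θ : ℝ) (hR : 0 < R) (hθ : 0 < θ)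
    (M : ℕ) (hM : M = ⌈Real.exp (n * R)⌉₊) (hMpos : 0 < M)
    (P : Measure (Fin n → ℝ)) (hP : IsProbabilityMeasure P) :
    (M : ℝ)⁻¹ * ∑ m : Fin M,
        (((Measure.pi fun _ : Fin M => P).prod
            (Measure.pi fun _ : Fin n => gaussianReal 0 N.toNNReal))
          {p : (Fin M → (Fin n → ℝ)) × (Fin n → ℝ) |
            decode N n P R θ hMpos p.1 (p.1 m + p.2) ≠ m}).toReal
      ≤ ((P.prod (Measure.pi fun _ : Fin n => gaussianReal 0 N.toNNReal))
          {p : (Fin n → ℝ) × (Fin n → ℝ) |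
            (1/(n : ℝ)) * Real.log (w N n (p.1 + p.2) p.1 / q N n P (p.1 + p.2)) ≤ R + θ}).toReal
        + Real.exp (-(n * θ)) := by
  have hpos : (0:ℝ) < M := by exact_mod_cast hMpos
  rw [inv_mul_le_iff₀ hpos]
  refine (Finset.sum_le_sum fun m _ =>
    per_message N hN n hn R θ hR hθ M hM hMpos P _ m).trans (le_of_eq ?_)
  rw [Finset.sum_const, Finset.card_univ, Fintype.card_fin, nsmul_eq_mul]
end
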